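/- arXiv:2404.05707 — 4 statements merged into one kernel-verified Lean document; each statement's English description precedes it below -/
import Mathlib

section
/- Let k be a field, n ≥ 2, let b ∈ GL(n, k) be an invertible lower-triangular matrix, and let σ be a permutation of {1, …, n}. Consider the element ω = (b·e_{σ(2)}) ∧ (b·e_{σ(3)}) ∧ ⋯ ∧ (b·e_{σ(n)}) of the (n−1)-st exterior power ⋀^{n−1}(k^n), expressed in the basis {e_{i_1} ∧ ⋯ ∧ e_{i_{n−1}} : i_1 < ⋯ < i_{n−1}} induced by the standard basis e_1, …, e_n of k^n. Then the coefficient of e_1 ∧ e_2 ∧ ⋯ ∧ e_{n−1} in ω is nonzero if and only if σ(1) = n. -/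
/- STATEMENT 7: the coefficient of `e_1 ∧ ⋯ ∧ e_{n−1}` in
   `(b·e_{σ(2)}) ∧ ⋯ ∧ (b·e_{σ(n)})` is nonzero iff `σ(1) = n`.

   We use 0-based indexing: `Fin n` replaces `{1, …, n}`, the wedge
   `(b·e_{σ(2)}) ∧ ⋯ ∧ (b·e_{σ(n)})` becomes the ordered product over the indices
   `1, …, n−1` of `Fin n`, the basis wedge `e_1 ∧ ⋯ ∧ e_{n−1}` corresponds to the
   subset `{0, …, n−2}`, and the condition `σ(1) = n` becomes `σ 0 = n−1`.
   Since this Mathlib version has no bundled basis of exterior powers, "the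
   coefficient of `e_1 ∧ ⋯ ∧ e_{n−1}` in ω" is captured by saying: ω admits an
   expression as a linear combination of the wedges `e_{i_1} ∧ ⋯ ∧ e_{i_{n−1}}`
   (`i_1 < ⋯ < i_{n−1}`), and in any such expression the coefficient at
   `{0, …, n−2}` is nonzero iff `σ 0 = n−1` (these wedges are linearly
   independent, so the coefficient is well defined). -/

namespace Stmt7

open ExteriorAlgebra

/-- The `i`-th standard basis vector of `k^n`. -/
noncomputable def stdBasis (k : Type*) [Field k] (n : ℕ) (i : Fin n) : Fin n → k :=
  Pi.single i 1

/-- The basis wedge `e_{i_1} ∧ ⋯ ∧ e_{i_r}` attached to a subset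
`S = {i_1 < ⋯ < i_r}` of `Fin n`, as an element of the exterior algebra
(it lies in the `r`-th exterior power). -/
noncomputable def basisWedge (k : Type*) [Field k] (n : ℕ) (S : Finset (Fin n)) :
    ExteriorAlgebra k (Fin n → k) :=
  ((S.sort (· ≤ ·)).map fun i => ι k (stdBasis k n i)).prod

theorem det_ne_zero_iff_aux {k : Type*} [Field k] (m : ℕ)
    (b : Matrix (Fin (m + 1)) (Fin (m + 1)) k) (hb : IsUnit b)
    (hbtri : ∀ i j, i < j → b i j = 0) (σ : Equiv.Perm (Fin (m + 1))) :
    (Matrix.of fun i j : Fin m => b j.castSucc (σ i.succ)).det ≠ 0 ↔ σ 0 = Fin.last m := by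
  constructor
  · intro h
    by_contra hne
    apply h
    obtain ⟨i, hi⟩ := σ.surjective (Fin.last m)
    have hi0 : i ≠ 0 := by
      rintro rfl
      exact hne hi
    obtain ⟨i, rfl⟩ := Fin.exists_succ_eq.mpr hi0
    apply Matrix.det_eq_zero_of_row_eq_zero i
    intro j
    rw [Matrix.of_apply, hi]
    exact hbtri _ _ (Fin.castSucc_lt_last j)
  · intro h
    have hne : ∀ i : Fin m, σ i.succ ≠ Fin.last m := by
      intro i hi
      rw [← h] at hi
      exact Fin.succ_ne_zero i (σ.injective hi)
    let f : Fin m → Fin m := fun i => (σ i.succ).castPred (hne i)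
    have hf : Function.Injective f := by
      intro i j hij
      have : σ i.succ = σ j.succ := by simpa [f] using hij
      exact Fin.succ_injective _ (σ.injective this)
    let τ : Equiv.Perm (Fin m) := Equiv.ofBijective f (Finite.injective_iff_bijective.mp hf)
    have hdiag : ∀ i, b i i ≠ 0 := by
      have h1 : b.det ≠ 0 := ((Matrix.isUnit_iff_isUnit_det b).mp hb).ne_zero
      rw [Matrix.det_of_lowerTriangular b (fun i j hij => hbtri i j hij)] at h1
      intro i
      exact Finset.prod_ne_zero_iff.mp h1 i (Finset.mem_univ i)
    let c : Matrix (Fin m) (Fin m) k := Matrix.of fun i j => b j.castSucc i.castSucc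
    have hc : c.det ≠ 0 := by
      rw [Matrix.det_of_upperTriangular (M := c)
        (fun i j hij => hbtri _ _ (Fin.castSucc_lt_castSucc_iff.mpr hij))]
      exact Finset.prod_ne_zero_iff.mpr fun i _ => hdiag _
    have heq : (Matrix.of fun i j : Fin m => b j.castSucc (σ i.succ)) = c.submatrix τ id := by
      ext i j
      simp [c, τ, f]
    rw [heq, Matrix.det_permute]
    refine mul_ne_zero ?_ hc
    rcases Int.units_eq_one_or (Equiv.Perm.sign τ) with h | h <;> simp [h]

theorem basisWedge_eq_family {k : Type*} [Field k] (n m : ℕ)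
    (s : Set.powersetCard (Fin n) m) :
    basisWedge k n (s : Finset (Fin n)) =
      ((exteriorPower.ιMulti_family k m (Pi.basisFun k (Fin n)) s :
        ⋀[k]^m (Fin n → k)) : ExteriorAlgebra k (Fin n → k)) := by
  obtain ⟨S, hS⟩ := s
  have hS' : S.card = m := hS
  subst hS'
  rw [exteriorPower.ιMulti_family, exteriorPower.ιMulti_apply_coe, ExteriorAlgebra.ιMulti_apply,
    basisWedge]
  congr 1
  apply List.ext_getElem
  · simp
  · intro i h1 h2
    simp [stdBasis, Set.powersetCard.ofFinEmbEquiv_symm_apply]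
    rfl

theorem sum_eq_aux {k : Type*} [Field k] (n m : ℕ) (coef : Finset (Fin n) → k) :
    (∑ S ∈ Finset.univ.filter (fun S : Finset (Fin n) => S.card = m),
                coef S • basisWedge k n S) =
      ((∑ s : Set.powersetCard (Fin n) m, coef (s : Finset (Fin n)) •
        (Pi.basisFun k (Fin n)).exteriorPower m s : ⋀[k]^m (Fin n → k)) :
          ExteriorAlgebra k (Fin n → k)) := by
  rw [AddSubmonoidClass.coe_finset_sum]
  simp only [Submodule.coe_smul, exteriorPower.coe_basis, ← basisWedge_eq_family]
  exact Finset.sum_subtype (p := fun S => S ∈ Set.powersetCard (Fin n) m) _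
    (by intro S; simp [Set.powersetCard.mem_iff]) (fun S => coef S • basisWedge k n S)

theorem coeff_nonzero_iff (k : Type*) [Field k] (n : ℕ) (hn : 2 ≤ n)
    (b : Matrix (Fin n) (Fin n) k) (hb : IsUnit b)
    (hbtri : ∀ i j : Fin n, i < j → b i j = 0)  -- lower-triangular
    (σ : Equiv.Perm (Fin n)) :
    -- ω = (b·e_{σ(2)}) ∧ ⋯ ∧ (b·e_{σ(n)})
    ∀ ω : ExteriorAlgebra k (Fin n → k),
      ω = (List.ofFn fun t : Fin (n - 1) =>
            ι k (b.mulVec (stdBasis k n (σ ⟨t.val + 1, by omega⟩)))).prod →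
      (∃ coef : Finset (Fin n) → k,
          ω = ∑ S ∈ Finset.univ.filter (fun S : Finset (Fin n) => S.card = n - 1),
                coef S • basisWedge k n S) ∧
      (∀ coef : Finset (Fin n) → k,
          ω = (∑ S ∈ Finset.univ.filter (fun S : Finset (Fin n) => S.card = n - 1),
                coef S • basisWedge k n S) →
          (coef (Finset.univ.filter (fun i : Fin n => i.val + 1 < n)) ≠ 0 ↔
            σ ⟨0, by omega⟩ = ⟨n - 1, by omega⟩)) := by
  obtain ⟨m, rfl⟩ : ∃ m, n = m + 1 := ⟨n - 1, by omega⟩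
  intro ω hω
  simp only [Nat.add_sub_cancel] at hω ⊢
  set v : Fin m → (Fin (m + 1) → k) := fun t => b.mulVec (stdBasis k (m + 1) (σ t.succ)) with hv
  have hω' : ω = ((exteriorPower.ιMulti k m v : ⋀[k]^m (Fin (m + 1) → k)) :
      ExteriorAlgebra k (Fin (m + 1) → k)) := by
    rw [exteriorPower.ιMulti_apply_coe, ExteriorAlgebra.ιMulti_apply, hω]
    rfl
  set B := (Pi.basisFun k (Fin (m + 1))).exteriorPower m with hB
  simp only [sum_eq_aux, hω', SetLike.coe_eq_coe]
  constructor
  · classical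
    refine ⟨fun S => if h : S ∈ Set.powersetCard (Fin (m + 1)) m then
      B.repr (exteriorPower.ιMulti k m v) ⟨S, h⟩ else 0, ?_⟩
    conv_lhs => rw [← B.sum_repr (exteriorPower.ιMulti k m v)]
    refine Finset.sum_congr rfl fun s _ => ?_
    simp [hB]
  · intro coef hcoef
    have hcard : (Finset.univ.filter (fun i : Fin (m + 1) => i.val + 1 < m + 1)) =
        Finset.univ.map Fin.castSuccEmb := by
      ext i
      simp only [Finset.mem_filter, Finset.mem_univ, true_and, Finset.mem_map]
      constructor
      · intro h
        exact ⟨⟨i.val, by omega⟩, rfl⟩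
      · rintro ⟨j, rfl⟩
        simp
    rw [hcard]
    let s0 : Set.powersetCard (Fin (m + 1)) m :=
      ⟨Finset.univ.map Fin.castSuccEmb, by simp [Set.powersetCard.mem_iff]⟩
    have h1 : coef (Finset.univ.map Fin.castSuccEmb) =
        exteriorPower.ιMultiDual k m (Pi.basisFun k (Fin (m + 1))) s0
          (exteriorPower.ιMulti k m v) := by
      rw [← exteriorPower.basis_repr_apply, hcoef, Module.Basis.repr_sum_self]
    have h2 : ∀ j, Set.powersetCard.ofFinEmbEquiv.symm s0 j = Fin.castSucc j := by
      intro j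
      rw [Set.powersetCard.ofFinEmbEquiv_symm_apply]
      have := Finset.orderEmbOfFin_unique (s := (s0 : Finset (Fin (m + 1)))) s0.prop
        (f := Fin.castSucc) (by intro x; simp [s0]) Fin.strictMono_castSucc
      exact (congrFun this j).symm
    rw [h1, exteriorPower.ιMultiDual_apply_ιMulti]
    simp only [h2]
    have h3 : (Matrix.of fun i j : Fin m =>
        (Pi.basisFun k (Fin (m + 1))).coord (Fin.castSucc j) (v i)) =
        Matrix.of fun i j : Fin m => b j.castSucc (σ i.succ) := by
      ext i j
      simp [hv, stdBasis]
    rw [h3]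
    exact det_ne_zero_iff_aux m b hb hbtri σ

end Stmt7
end

section
/- Let k be an algebraically closed field and n ≥ 1. For X, Y ∈ GSp(2n, k), there exist p ∈ P and q ∈ Q with pXq = Y if and only if rank(X_A) = rank(Y_A). (That is, two elements of GSp(2n, k) lie in the same Bruhat stratum, i.e. the same (P × Q)-orbit under (p, q)·g = pgq⁻¹, precisely when the upper-left n×n blocks have equal rank; note pXq = Y for some q ∈ Q iff pXq' = Y for some q' ∈ Q since Q is a group.) -/
/- STATEMENT 8: two elements of GSp(2n, k) lie in the same (P × Q)-Bruhat
   stratum iff their upper-left n×n blocks have the same rank.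
   We index `k^{2n}` by `Fin n ⊕ Fin n`: `Sum.inl` gives the coordinates
   `1, …, n` and `Sum.inr` the coordinates `n+1, …, 2n`. -/

namespace Stmt8

open Matrix

variable (k : Type*) [Field k] (n : ℕ)

/-- The n×n antidiagonal matrix `J` (ones on the antidiagonal). -/
def J : Matrix (Fin n) (Fin n) k :=
  fun i j => if i.val + j.val + 1 = n then 1 else 0

/-- The symplectic form matrix `Ω = [[0, −J], [J, 0]]`. -/
def Ω : Matrix (Fin n ⊕ Fin n) (Fin n ⊕ Fin n) k :=
  Matrix.fromBlocks 0 (-(J k n)) (J k n) 0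

/-- `GSp(2n, k) = {g ∈ GL(2n, k) : gᵀ Ω g = c Ω for some c ∈ kˣ}`. -/
def GSp : Set (Matrix (Fin n ⊕ Fin n) (Fin n ⊕ Fin n) k) :=
  {g | IsUnit g ∧ ∃ c : kˣ, gᵀ * Ω k n * g = (c : k) • Ω k n}

/-- `span(e_{n+1}, …, e_{2n})`, the span of the last n standard basis vectors. -/
noncomputable def spanLast : Submodule k ((Fin n ⊕ Fin n) → k) :=
  Submodule.span k (Set.range fun i : Fin n => Pi.single (Sum.inr i) (1 : k))

/-- `span(e_1, …, e_n)`, the span of the first n standard basis vectors. -/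
noncomputable def spanFirst : Submodule k ((Fin n ⊕ Fin n) → k) :=
  Submodule.span k (Set.range fun i : Fin n => Pi.single (Sum.inl i) (1 : k))

/-- `P = {g ∈ GSp(2n,k) : g·span(e_{n+1}, …, e_{2n}) ⊆ span(e_{n+1}, …, e_{2n})}`. -/
noncomputable def P : Set (Matrix (Fin n ⊕ Fin n) (Fin n ⊕ Fin n) k) :=
  {g ∈ GSp k n | ∀ v ∈ spanLast k n, g.mulVec v ∈ spanLast k n}

/-- `Q = {g ∈ GSp(2n,k) : g·span(e_1, …, e_n) ⊆ span(e_1, …, e_n)}`. -/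
noncomputable def Q : Set (Matrix (Fin n ⊕ Fin n) (Fin n ⊕ Fin n) k) :=
  {g ∈ GSp k n | ∀ v ∈ spanFirst k n, g.mulVec v ∈ spanFirst k n}

section helpers

variable {k n}

lemma J_mul_J : J k n * J k n = 1 := by
  ext i j
  rw [Matrix.mul_apply, Finset.sum_eq_single (Fin.rev i)]
  · have h1 : i.val + (Fin.rev i).val + 1 = n := by rw [Fin.val_rev]; omega
    simp only [J, h1, if_true, one_mul, Matrix.one_apply]
    refine if_congr ?_ rfl rfl
    rw [Fin.ext_iff, Fin.val_rev]; omega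
  · intro b _ hb
    have : ¬ (i.val + b.val + 1 = n) := by
      intro h; apply hb; rw [Fin.ext_iff, Fin.val_rev]; omega
    simp [J, this]
  · simp

lemma J_transpose : (J k n)ᵀ = J k n := by
  ext i j
  simp only [J, Matrix.transpose_apply]
  exact if_congr (by omega) rfl rfl

lemma Ω_mul_neg : Ω k n * (-Ω k n) = 1 := by
  simp [Ω, Matrix.fromBlocks_neg, Matrix.fromBlocks_multiply, J_mul_J]

lemma isUnit_Ω : IsUnit (Ω k n) := IsUnit.of_mul_eq_one _ Ω_mul_neg

lemma GSp_mul {g h : Matrix (Fin n ⊕ Fin n) (Fin n ⊕ Fin n) k}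
    (hg : g ∈ GSp k n) (hh : h ∈ GSp k n) : g * h ∈ GSp k n := by
  obtain ⟨ug, c, hc⟩ := hg
  obtain ⟨uh, d, hd⟩ := hh
  refine ⟨ug.mul uh, c * d, ?_⟩
  have : (g * h)ᵀ * Ω k n * (g * h) = hᵀ * (gᵀ * Ω k n * g) * h := by
    simp only [Matrix.transpose_mul, Matrix.mul_assoc]
  rw [this, hc, Matrix.mul_smul, Matrix.smul_mul, hd, smul_smul, Units.val_mul]

lemma GSp_inv {g : Matrix (Fin n ⊕ Fin n) (Fin n ⊕ Fin n) k}
    (hg : g ∈ GSp k n) : g⁻¹ ∈ GSp k n := by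
  obtain ⟨ug, c, hc⟩ := hg
  have hd : IsUnit g.det := (Matrix.isUnit_iff_isUnit_det g).1 ug
  refine ⟨(Matrix.isUnit_nonsing_inv_iff).2 ug, c⁻¹, ?_⟩
  have h1 : g⁻¹ᵀ * (gᵀ * Ω k n * g) * g⁻¹ = Ω k n := by
    have : g⁻¹ᵀ * gᵀ = 1 := by
      rw [← Matrix.transpose_mul, Matrix.mul_nonsing_inv _ hd, Matrix.transpose_one]
    calc _ = (g⁻¹ᵀ * gᵀ) * Ω k n * (g * g⁻¹) := by simp only [Matrix.mul_assoc]
      _ = _ := by rw [this, Matrix.mul_nonsing_inv _ hd, Matrix.one_mul, Matrix.mul_one]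
  rw [hc, Matrix.mul_smul, Matrix.smul_mul] at h1
  rw [← h1, smul_smul, h1]
  simp

lemma mem_spanLast (v : (Fin n ⊕ Fin n) → k) :
    v ∈ spanLast k n ↔ ∀ i, v (Sum.inl i) = 0 := by
  constructor
  · intro h
    refine Submodule.span_induction (p := fun v _ => ∀ i, v (Sum.inl i) = 0) ?_ ?_ ?_ ?_ h
    · rintro _ ⟨j, rfl⟩ i; simp
    · simp
    · intro x y _ _ hx hy i; simp [hx i, hy i]
    · intro a x _ hx i; simp [hx i]
  · intro h
    have : v = ∑ i : Fin n, v (Sum.inr i) • (Pi.single (Sum.inr i) (1 : k)) := by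
      ext (i | i)
      · simp [h i]
      · simp [Finset.sum_apply, Pi.single_apply]
    rw [this]
    exact Submodule.sum_mem _ fun i _ => Submodule.smul_mem _ _ (Submodule.subset_span ⟨i, rfl⟩)

lemma mem_spanFirst (v : (Fin n ⊕ Fin n) → k) :
    v ∈ spanFirst k n ↔ ∀ i, v (Sum.inr i) = 0 := by
  constructor
  · intro h
    refine Submodule.span_induction (p := fun v _ => ∀ i, v (Sum.inr i) = 0) ?_ ?_ ?_ ?_ h
    · rintro _ ⟨j, rfl⟩ i; simp
    · simp
    · intro x y _ _ hx hy i; simp [hx i, hy i]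
    · intro a x _ hx i; simp [hx i]
  · intro h
    have : v = ∑ i : Fin n, v (Sum.inl i) • (Pi.single (Sum.inl i) (1 : k)) := by
      ext (i | i)
      · simp [Finset.sum_apply, Pi.single_apply]
      · simp [h i]
    rw [this]
    exact Submodule.sum_mem _ fun i _ => Submodule.smul_mem _ _ (Submodule.subset_span ⟨i, rfl⟩)

lemma mem_P_iff (g : Matrix (Fin n ⊕ Fin n) (Fin n ⊕ Fin n) k) :
    g ∈ P k n ↔ g ∈ GSp k n ∧ g.toBlocks₁₂ = 0 := by
  refine and_congr_right fun _ => ⟨fun h => ?_, fun h v hv => ?_⟩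
  · ext i j
    have := (mem_spanLast _).1 (h (Pi.single (Sum.inr j) 1) (Submodule.subset_span ⟨j, rfl⟩)) i
    simpa [Matrix.toBlocks₁₂] using this
  · rw [mem_spanLast] at hv ⊢
    intro i
    have h' : ∀ j, g (Sum.inl i) (Sum.inr j) = 0 := fun j => congrFun (congrFun h i) j
    simp [Matrix.mulVec, dotProduct, hv, h']

lemma mem_Q_iff (g : Matrix (Fin n ⊕ Fin n) (Fin n ⊕ Fin n) k) :
    g ∈ Q k n ↔ g ∈ GSp k n ∧ g.toBlocks₂₁ = 0 := by
  refine and_congr_right fun _ => ⟨fun h => ?_, fun h v hv => ?_⟩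
  · ext i j
    have := (mem_spanFirst _).1 (h (Pi.single (Sum.inl j) 1) (Submodule.subset_span ⟨j, rfl⟩)) i
    simpa [Matrix.toBlocks₂₁] using this
  · rw [mem_spanFirst] at hv ⊢
    intro i
    have h' : ∀ j, g (Sum.inr i) (Sum.inl j) = 0 := fun j => congrFun (congrFun h i) j
    simp [Matrix.mulVec, dotProduct, hv, h']

lemma isUnit_blocks_P {g : Matrix (Fin n ⊕ Fin n) (Fin n ⊕ Fin n) k} (hg : g ∈ P k n) :
    IsUnit g.toBlocks₁₁ ∧ IsUnit g.toBlocks₂₂ := by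
  obtain ⟨h, h0⟩ := (mem_P_iff g).1 hg
  have h1 := h.1
  rw [← Matrix.fromBlocks_toBlocks g, h0, Matrix.isUnit_fromBlocks_zero₁₂] at h1
  exact h1

lemma isUnit_blocks_Q {g : Matrix (Fin n ⊕ Fin n) (Fin n ⊕ Fin n) k} (hg : g ∈ Q k n) :
    IsUnit g.toBlocks₁₁ ∧ IsUnit g.toBlocks₂₂ := by
  obtain ⟨h, h0⟩ := (mem_Q_iff g).1 hg
  have h1 := h.1
  rw [← Matrix.fromBlocks_toBlocks g, h0, Matrix.isUnit_fromBlocks_zero₂₁] at h1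
  exact h1

lemma toBlocks₁₁_mul (g h : Matrix (Fin n ⊕ Fin n) (Fin n ⊕ Fin n) k) :
    (g * h).toBlocks₁₁ = g.toBlocks₁₁ * h.toBlocks₁₁ + g.toBlocks₁₂ * h.toBlocks₂₁ := by
  conv_lhs => rw [← Matrix.fromBlocks_toBlocks g, ← Matrix.fromBlocks_toBlocks h,
    Matrix.fromBlocks_multiply, Matrix.toBlocks_fromBlocks₁₁]

lemma toBlocks₁₂_mul (g h : Matrix (Fin n ⊕ Fin n) (Fin n ⊕ Fin n) k) :
    (g * h).toBlocks₁₂ = g.toBlocks₁₁ * h.toBlocks₁₂ + g.toBlocks₁₂ * h.toBlocks₂₂ := by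
  conv_lhs => rw [← Matrix.fromBlocks_toBlocks g, ← Matrix.fromBlocks_toBlocks h,
    Matrix.fromBlocks_multiply, Matrix.toBlocks_fromBlocks₁₂]

lemma toBlocks₂₁_mul (g h : Matrix (Fin n ⊕ Fin n) (Fin n ⊕ Fin n) k) :
    (g * h).toBlocks₂₁ = g.toBlocks₂₁ * h.toBlocks₁₁ + g.toBlocks₂₂ * h.toBlocks₂₁ := by
  conv_lhs => rw [← Matrix.fromBlocks_toBlocks g, ← Matrix.fromBlocks_toBlocks h,
    Matrix.fromBlocks_multiply, Matrix.toBlocks_fromBlocks₂₁]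

lemma P_mul {g h : Matrix (Fin n ⊕ Fin n) (Fin n ⊕ Fin n) k}
    (hg : g ∈ P k n) (hh : h ∈ P k n) : g * h ∈ P k n := by
  refine ⟨GSp_mul hg.1 hh.1, fun v hv => ?_⟩
  rw [← Matrix.mulVec_mulVec]
  exact hg.2 _ (hh.2 _ hv)

lemma P_inv {g : Matrix (Fin n ⊕ Fin n) (Fin n ⊕ Fin n) k}
    (hg : g ∈ P k n) : g⁻¹ ∈ P k n := by
  have hu := (isUnit_blocks_P hg).1
  rw [mem_P_iff] at hg ⊢
  refine ⟨GSp_inv hg.1, ?_⟩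
  have hd : IsUnit g.det := (Matrix.isUnit_iff_isUnit_det g).1 hg.1.1
  have h := toBlocks₁₂_mul g g⁻¹
  rw [Matrix.mul_nonsing_inv _ hd, hg.2, Matrix.zero_mul, add_zero] at h
  have h1 : (1 : Matrix (Fin n ⊕ Fin n) (Fin n ⊕ Fin n) k).toBlocks₁₂ = 0 := by
    rw [← Matrix.fromBlocks_one, Matrix.toBlocks_fromBlocks₁₂]
  rw [h1] at h
  exact hu.mul_left_cancel (by rw [← h, Matrix.mul_zero])

/-- The standard idempotent of rank `r`. -/
def stdE (k : Type*) [Field k] (n r : ℕ) : Matrix (Fin n) (Fin n) k :=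
  Matrix.diagonal fun i => if i.val < r then 1 else 0

lemma stdE_transpose (r : ℕ) : (stdE k n r)ᵀ = stdE k n r := Matrix.diagonal_transpose _

lemma stdE_mul_self (r : ℕ) : stdE k n r * stdE k n r = stdE k n r := by
  simp [stdE, Matrix.diagonal_mul_diagonal]

lemma exists_normal (A : Matrix (Fin n) (Fin n) k) :
    ∃ U V : Matrix (Fin n) (Fin n) k, IsUnit U ∧ IsUnit V ∧ U * A * V = stdE k n A.rank := by
  classical
  obtain ⟨L, L', D, hD⟩ :=
    Matrix.Pivot.exists_list_transvec_mul_mul_list_transvec_eq_diagonal A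
  set M := (L.map Matrix.TransvectionStruct.toMatrix).prod with hM
  set N := (L'.map Matrix.TransvectionStruct.toMatrix).prod with hN
  have dM : M.det = 1 := Matrix.TransvectionStruct.det_toMatrix_prod L
  have dN : N.det = 1 := Matrix.TransvectionStruct.det_toMatrix_prod L'
  have uM : IsUnit M := by rw [Matrix.isUnit_iff_isUnit_det, dM]; exact isUnit_one
  have uN : IsUnit N := by rw [Matrix.isUnit_iff_isUnit_det, dN]; exact isUnit_one
  have hr : A.rank = Fintype.card {i // D i ≠ 0} := by
    rw [← Matrix.rank_diagonal, ← hD,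
      Matrix.rank_mul_eq_left_of_isUnit_det _ _ (by rw [dN]; exact isUnit_one),
      Matrix.rank_mul_eq_right_of_isUnit_det _ _ (by rw [dM]; exact isUnit_one)]
  have hle : A.rank ≤ n := by simpa using A.rank_le_width
  have hcard : Fintype.card {i // D i ≠ 0} = Fintype.card {i : Fin n // i.val < A.rank} := by
    rw [← hr, Fintype.card_congr (Fin.castLEquiv hle).symm, Fintype.card_fin]
  let e : {i // D i ≠ 0} ≃ {i : Fin n // i.val < A.rank} := Fintype.equivOfCardEq hcard
  let σ : Equiv.Perm (Fin n) := e.extendSubtype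
  have hσ : ∀ i, D i ≠ 0 ↔ (σ i).val < A.rank := fun i =>
    ⟨fun h => e.extendSubtype_mem i h, fun h => by
      by_contra h'
      exact e.extendSubtype_not_mem i (not_not.2 h') h⟩
  let S : Matrix (Fin n) (Fin n) k := Matrix.diagonal fun i => if D i = 0 then 1 else (D i)⁻¹
  have uS : IsUnit S := by
    rw [Matrix.isUnit_iff_isUnit_det, Matrix.det_diagonal, isUnit_iff_ne_zero,
      Finset.prod_ne_zero_iff]
    intro i _
    split_ifs with h
    · exact one_ne_zero
    · exact inv_ne_zero h
  let R : Matrix (Fin n) (Fin n) k := σ.symm.toPEquiv.toMatrix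
  let R' : Matrix (Fin n) (Fin n) k := σ.toPEquiv.toMatrix
  have hRR : R * R' = 1 := by
    rw [PEquiv.toMatrix_toPEquiv_mul]
    ext i j
    simp [R', PEquiv.toMatrix_apply, Matrix.one_apply]
  have uR : IsUnit R := IsUnit.of_mul_eq_one _ hRR
  have uR' : IsUnit R' := IsUnit.of_mul_eq_one _ (mul_eq_one_comm.1 hRR)
  refine ⟨R * S * M, N * R', (uR.mul uS).mul uM, uN.mul uR', ?_⟩
  calc R * S * M * A * (N * R') = R * (S * (M * A * N)) * R' := by
        simp only [Matrix.mul_assoc]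
    _ = _ := by
      rw [hD, Matrix.diagonal_mul_diagonal, PEquiv.toMatrix_toPEquiv_mul,
        PEquiv.mul_toMatrix_toPEquiv]
      ext i j
      have h := hσ (σ.symm i)
      rw [Equiv.apply_symm_apply] at h
      by_cases hij : i = j
      · subst hij
        by_cases h0 : D (σ.symm i) = 0
        · have : ¬ i.val < A.rank := fun h' => h.2 h' h0
          simp [stdE, h0, this]
        · simp [stdE, h0, h.1 h0]
      · simp [stdE, hij]

lemma key (X : Matrix (Fin n ⊕ Fin n) (Fin n ⊕ Fin n) k) (hX : X ∈ GSp k n)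
    (E U U' V V' : Matrix (Fin n) (Fin n) k) (hET : Eᵀ = E) (hEE : E * E = E)
    (hU : U * U' = 1) (hV : V * V' = 1) (h : U * X.toBlocks₁₁ * V = E) :
    ∃ p ∈ P k n, ∃ h : Matrix (Fin n) (Fin n) k, IsUnit h ∧
      (p * X).toBlocks₁₁ = E * h ∧ (p * X).toBlocks₂₁ = J k n * (1 - E) * h := by
  obtain ⟨uX, c, hc⟩ := hX
  set A := X.toBlocks₁₁ with hA
  set C := X.toBlocks₂₁ with hC
  have hU' : U' * U = 1 := mul_eq_one_comm.1 hU
  have hV' : V' * V = 1 := mul_eq_one_comm.1 hV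
  have hUT : Uᵀ * U'ᵀ = 1 := by rw [← Matrix.transpose_mul, hU', Matrix.transpose_one]
  have hUT' : U'ᵀ * Uᵀ = 1 := mul_eq_one_comm.1 hUT
  have JJ : J k n * J k n = 1 := J_mul_J
  have JT : (J k n)ᵀ = J k n := J_transpose
  -- the isotropy condition
  have hiso : Aᵀ * (J k n * C) = (J k n * C)ᵀ * A := by
    have h1 := congrArg Matrix.toBlocks₁₁ hc
    rw [← Matrix.fromBlocks_toBlocks X, ← hA, ← hC] at h1
    simp only [Ω, Matrix.fromBlocks_transpose, Matrix.fromBlocks_multiply,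
      Matrix.toBlocks_fromBlocks₁₁, Matrix.fromBlocks_smul, smul_zero, Matrix.mul_zero, zero_add,
      add_zero, Matrix.mul_neg, Matrix.neg_mul] at h1
    rw [Matrix.transpose_mul, JT, ← Matrix.mul_assoc]
    rw [← sub_eq_add_neg] at h1
    exact (sub_eq_zero.1 h1).symm
  -- left inverse
  obtain ⟨M, N, hMN⟩ : ∃ M N : Matrix (Fin n) (Fin n) k, M * A + N * C = 1 := by
    have hd : IsUnit X.det := (Matrix.isUnit_iff_isUnit_det X).1 uX
    have h1 := toBlocks₁₁_mul X⁻¹ X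
    rw [Matrix.nonsing_inv_mul _ hd] at h1
    refine ⟨_, _, h1.symm.trans ?_⟩
    rw [← Matrix.fromBlocks_one, Matrix.toBlocks_fromBlocks₁₁]
  set C₁ := U'ᵀ * J k n * C * V with hC₁
  have hsym : E * C₁ = C₁ᵀ * E := by
    have e1 : E * C₁ = Vᵀ * (Aᵀ * (J k n * C)) * V := by
      calc E * C₁ = Eᵀ * C₁ := by rw [hET]
        _ = Vᵀ * Aᵀ * (Uᵀ * U'ᵀ) * J k n * C * V := by
          rw [← h, hC₁]; simp only [Matrix.transpose_mul, Matrix.mul_assoc]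
        _ = _ := by rw [hUT, Matrix.mul_one]; simp only [Matrix.mul_assoc]
    have e2 : C₁ᵀ * E = Vᵀ * ((J k n * C)ᵀ * A) * V := by
      calc C₁ᵀ * E = Vᵀ * Cᵀ * (J k n)ᵀ * (U' * U) * A * V := by
            rw [← h, hC₁]
            simp only [Matrix.transpose_mul, Matrix.transpose_transpose, Matrix.mul_assoc]
        _ = _ := by
          rw [hU', Matrix.mul_one]; simp only [Matrix.transpose_mul, Matrix.mul_assoc]
    rw [e1, e2, hiso]
  have hMN₁ : (V' * M * U') * E + (V' * N * J k n * Uᵀ) * C₁ = 1 := by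
    have e1 : (V' * M * U') * E = V' * (M * A) * V := by
      calc _ = V' * M * (U' * U) * A * V := by rw [← h]; simp only [Matrix.mul_assoc]
        _ = _ := by rw [hU', Matrix.mul_one]; simp only [Matrix.mul_assoc]
    have e2 : (V' * N * J k n * Uᵀ) * C₁ = V' * (N * C) * V := by
      calc _ = V' * N * J k n * (Uᵀ * U'ᵀ) * J k n * C * V := by
            rw [hC₁]; simp only [Matrix.mul_assoc]
        _ = V' * N * (J k n * J k n) * C * V := by
            rw [hUT, Matrix.mul_one]; simp only [Matrix.mul_assoc]
        _ = _ := by rw [JJ, Matrix.mul_one]; simp only [Matrix.mul_assoc]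
    rw [e1, e2, ← Matrix.add_mul, ← Matrix.mul_add, hMN, Matrix.mul_one, hV']
  generalize V' * M * U' = M₁ at hMN₁
  generalize V' * N * J k n * Uᵀ = N₁ at hMN₁
  -- consequences
  have hECE : E * C₁ * E = E * C₁ := by
    rw [hsym, Matrix.mul_assoc, hEE]
  have hECT : E * C₁ᵀ * E = E * C₁ := by
    rw [Matrix.mul_assoc, ← hsym, ← Matrix.mul_assoc, hEE]
  set F := 1 - E with hF
  have hECF : E * (C₁ * F) = 0 := by
    rw [← Matrix.mul_assoc, hF, Matrix.mul_sub, Matrix.mul_one, hECE, sub_self]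
  set h₀ := E + C₁ * F with hh₀
  have hEh : E * h₀ = E := by rw [hh₀, Matrix.mul_add, hEE, hECF, add_zero]
  have hFh : F * h₀ = C₁ * F := by
    rw [hF, Matrix.sub_mul, hEh, Matrix.one_mul, hh₀]; abel
  have uh₀ : ((M₁ + N₁ * C₁) * E + N₁ * F) * h₀ = 1 := by
    rw [Matrix.add_mul, Matrix.mul_assoc, hEh, Matrix.mul_assoc, hFh, ← hMN₁, hF]
    noncomm_ring
  set S := -(C₁ * E + E * C₁ᵀ - E * C₁) with hS
  have hST : Sᵀ = S := by
    rw [hS]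
    simp only [Matrix.transpose_neg, Matrix.transpose_sub, Matrix.transpose_add,
      Matrix.transpose_mul, Matrix.transpose_transpose, hET]
    rw [hsym]; abel
  have hSE : S * E + C₁ = C₁ * F := by
    have : S * E = -(C₁ * E) := by
      rw [hS, Matrix.neg_mul, Matrix.sub_mul, Matrix.add_mul, Matrix.mul_assoc C₁, hEE, hECT,
        hECE]
      abel
    rw [this, hF, Matrix.mul_sub, Matrix.mul_one]; abel
  let p : Matrix (Fin n ⊕ Fin n) (Fin n ⊕ Fin n) k :=
    Matrix.fromBlocks U 0 (J k n * S * U) (J k n * U'ᵀ * J k n)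
  have hpΩ : pᵀ * Ω k n * p = Ω k n := by
    have a1 : Uᵀ * J k n * (J k n * S * U) = Uᵀ * S * U := by
      calc _ = Uᵀ * (J k n * J k n) * S * U := by simp only [Matrix.mul_assoc]
        _ = _ := by rw [JJ, Matrix.mul_one]
    have a2 : (J k n * S * U)ᵀ * J k n * U = Uᵀ * S * U := by
      calc _ = Uᵀ * Sᵀ * ((J k n)ᵀ * J k n) * U := by
            simp only [Matrix.transpose_mul, Matrix.mul_assoc]
        _ = _ := by rw [JT, JJ, Matrix.mul_one, hST]
    have a3 : Uᵀ * J k n * (J k n * U'ᵀ * J k n) = J k n := by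
      calc _ = Uᵀ * (J k n * J k n) * U'ᵀ * J k n := by simp only [Matrix.mul_assoc]
        _ = _ := by rw [JJ, Matrix.mul_one, hUT, Matrix.one_mul]
    have a4 : (J k n * U'ᵀ * J k n)ᵀ * J k n * U = J k n := by
      calc _ = (J k n)ᵀ * U' * ((J k n)ᵀ * J k n) * U := by
            simp only [Matrix.transpose_mul, Matrix.transpose_transpose, Matrix.mul_assoc]
        _ = _ := by rw [JT, JJ, Matrix.mul_one, Matrix.mul_assoc, hU', Matrix.mul_one]
    simp only [p, Ω, Matrix.fromBlocks_transpose, Matrix.fromBlocks_multiply,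
      Matrix.mul_zero, Matrix.zero_mul, zero_add, add_zero, Matrix.mul_neg, Matrix.neg_mul,
      Matrix.transpose_zero, a1, a2, a3, a4, neg_zero, add_neg_cancel]
  have up : IsUnit p := by
    apply IsUnit.of_mul_eq_one (-Ω k n * pᵀ * Ω k n)
    apply mul_eq_one_comm.1
    calc -Ω k n * pᵀ * Ω k n * p = -Ω k n * (pᵀ * Ω k n * p) := by
          simp only [Matrix.mul_assoc]
      _ = 1 := by rw [hpΩ]; exact mul_eq_one_comm.1 Ω_mul_neg
  have hp : p ∈ P k n := by
    rw [mem_P_iff]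
    exact ⟨⟨up, 1, by rw [hpΩ, Units.val_one, one_smul]⟩, Matrix.toBlocks_fromBlocks₁₂ _ _ _ _⟩
  have hUA : U * A = E * V' := by rw [← h, Matrix.mul_assoc _ V, hV, Matrix.mul_one]
  have hUC : U'ᵀ * J k n * C = C₁ * V' := by
    rw [hC₁, Matrix.mul_assoc _ V, hV, Matrix.mul_one]
  refine ⟨p, hp, h₀ * V', (IsUnit.of_mul_eq_one _ (mul_eq_one_comm.1 uh₀)).mul
    (IsUnit.of_mul_eq_one _ hV'), ?_, ?_⟩
  · rw [toBlocks₁₁_mul, ← hA, ← hC]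
    simp only [p, Matrix.toBlocks_fromBlocks₁₁, Matrix.toBlocks_fromBlocks₁₂, Matrix.zero_mul,
      add_zero]
    rw [hUA, ← Matrix.mul_assoc, hEh]
  · rw [toBlocks₂₁_mul, ← hA, ← hC]
    simp only [p, Matrix.toBlocks_fromBlocks₂₁, Matrix.toBlocks_fromBlocks₂₂]
    calc J k n * S * U * A + J k n * U'ᵀ * J k n * C
        = J k n * (S * (U * A) + U'ᵀ * J k n * C) := by
          simp only [Matrix.mul_assoc, Matrix.mul_add]
      _ = J k n * ((S * E + C₁) * V') := by
          rw [hUA, hUC, Matrix.add_mul, Matrix.mul_assoc S]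
      _ = J k n * F * (h₀ * V') := by
          rw [hSE, ← hFh]; simp only [Matrix.mul_assoc]

lemma key' (X : Matrix (Fin n ⊕ Fin n) (Fin n ⊕ Fin n) k) (hX : X ∈ GSp k n) :
    ∃ p ∈ P k n, ∃ h : Matrix (Fin n) (Fin n) k, IsUnit h ∧
      (p * X).toBlocks₁₁ = stdE k n X.toBlocks₁₁.rank * h ∧
      (p * X).toBlocks₂₁ = J k n * (1 - stdE k n X.toBlocks₁₁.rank) * h := by
  obtain ⟨U, V, uU, uV, h⟩ := exists_normal X.toBlocks₁₁
  exact key X hX _ U U⁻¹ V V⁻¹ (stdE_transpose _) (stdE_mul_self _)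
    (Matrix.mul_nonsing_inv _ ((Matrix.isUnit_iff_isUnit_det U).1 uU))
    (Matrix.mul_nonsing_inv _ ((Matrix.isUnit_iff_isUnit_det V).1 uV)) h

end helpers

theorem bruhat_stratum_iff_rank [IsAlgClosed k] (hn : 1 ≤ n)
    (X Y : Matrix (Fin n ⊕ Fin n) (Fin n ⊕ Fin n) k)
    (hX : X ∈ GSp k n) (hY : Y ∈ GSp k n) :
    (∃ p ∈ P k n, ∃ q ∈ Q k n, p * X * q = Y) ↔
      X.toBlocks₁₁.rank = Y.toBlocks₁₁.rank := by
  constructor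
  · rintro ⟨p, hp, q, hq, rfl⟩
    have up := (isUnit_blocks_P hp).1
    have uq := (isUnit_blocks_Q hq).1
    rw [toBlocks₁₁_mul, toBlocks₁₁_mul, ((mem_P_iff p).1 hp).2, ((mem_Q_iff q).1 hq).2,
      Matrix.zero_mul, Matrix.mul_zero, add_zero, add_zero,
      Matrix.rank_mul_eq_left_of_isUnit_det _ _ ((Matrix.isUnit_iff_isUnit_det _).1 uq),
      Matrix.rank_mul_eq_right_of_isUnit_det _ _ ((Matrix.isUnit_iff_isUnit_det _).1 up)]
  · intro hr
    obtain ⟨p₁, hp₁, h₁, u₁, e₁, f₁⟩ := key' X hX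
    obtain ⟨p₂, hp₂, h₂, u₂, e₂, f₂⟩ := key' Y hY
    rw [hr] at e₁ f₁
    have d₁ := (Matrix.isUnit_iff_isUnit_det _).1 u₁
    have dp₂ := (Matrix.isUnit_iff_isUnit_det _).1 hp₂.1.1
    have hG : p₁ * X ∈ GSp k n := GSp_mul hp₁.1 hX
    have dG := (Matrix.isUnit_iff_isUnit_det _).1 hG.1
    have hq : (p₁ * X)⁻¹ * (p₂ * Y) ∈ GSp k n := GSp_mul (GSp_inv hG) (GSp_mul hp₂.1 hY)
    refine ⟨p₂⁻¹ * p₁, P_mul (P_inv hp₂) hp₁, (p₁ * X)⁻¹ * (p₂ * Y), ?_, ?_⟩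
    · rw [mem_Q_iff]
      refine ⟨hq, ?_⟩
      have g1 : (p₂ * Y).toBlocks₁₁ = (p₁ * X).toBlocks₁₁ * (h₁⁻¹ * h₂) := by
        rw [e₁, e₂, Matrix.mul_assoc, ← Matrix.mul_assoc h₁, Matrix.mul_nonsing_inv _ d₁,
          Matrix.one_mul]
      have g2 : (p₂ * Y).toBlocks₂₁ = (p₁ * X).toBlocks₂₁ * (h₁⁻¹ * h₂) := by
        rw [f₁, f₂, Matrix.mul_assoc _ h₁, ← Matrix.mul_assoc h₁, Matrix.mul_nonsing_inv _ d₁,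
          Matrix.one_mul]
      have g3 := toBlocks₂₁_mul (p₁ * X)⁻¹ (p₁ * X)
      rw [Matrix.nonsing_inv_mul _ dG, ← Matrix.fromBlocks_one, Matrix.toBlocks_fromBlocks₂₁]
        at g3
      rw [toBlocks₂₁_mul, g1, g2]
      generalize h₁⁻¹ * h₂ = w
      rw [← Matrix.mul_assoc, ← Matrix.mul_assoc, ← Matrix.add_mul, ← g3,
        Matrix.zero_mul]
    · calc p₂⁻¹ * p₁ * X * ((p₁ * X)⁻¹ * (p₂ * Y))
          = p₂⁻¹ * ((p₁ * X) * (p₁ * X)⁻¹) * (p₂ * Y) := by simp only [Matrix.mul_assoc]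
        _ = p₂⁻¹ * p₂ * Y := by
          rw [Matrix.mul_nonsing_inv _ dG, Matrix.mul_one]; simp only [Matrix.mul_assoc]
        _ = Y := by rw [Matrix.nonsing_inv_mul _ dp₂, Matrix.one_mul]



end Stmt8
end

section
/- Let k be an algebraically closed field and n ≥ 1. Let A = k[x_{ij} (1 ≤ i, j ≤ 2n), t, s] and let I ⊆ A be the ideal generated by the 4n² entries of the matrix Xᵀ Ω X − t·Ω (where X = (x_{ij})) together with t·s − 1; set R = A/I (the coordinate ring of GSp(2n)). Let g ∈ GL(2n, k) satisfy gᵀ Ω g = c·Ω for some c ∈ kˣ, let m ⊂ R be the maximal ideal which is the kernel of the k-algebra map R → k sending x_{ij} ↦ g_{ij}, t ↦ c, s ↦ c⁻¹, and let h ∈ R be the image of det((x_{ij})_{1 ≤ i, j ≤ n}). Set r = rank(g_A). Then in the localization R_m, the element h lies in the (n−r)-th power of the maximal ideal m·R_m but not in its (n−r+1)-st power; i.e., the order of vanishing of the Hasse invariant h at g equals n − rank(g_A). Moreover, for every 0 ≤ i ≤ n there exists such a g with rank(g_A) = i, so the order of vanishing takes exactly the values 0, 1, …, n. -/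
/- STATEMENT 12: the order of vanishing of the Hasse invariant
   `h = det((x_{ij})_{1 ≤ i,j ≤ n})` on the coordinate ring `R` of `GSp(2n)` at a
   point `g` equals `n − rank(g_A)`, and all values `0, …, n` occur.

   We index `k^{2n}` by `Fin n ⊕ Fin n`.  The coordinate ring is
   `R = A/I` with `A = k[x_{ij}, t, s]` (variables `Sum.inl (i,j) = x_{ij}`,
   `Sum.inr false = t`, `Sum.inr true = s`) and `I` generated by the entries of
   `Xᵀ Ω X − t·Ω` together with `t·s − 1`.  The maximal ideal `m ⊂ R` attached to
   `g` is the image in `R` of the kernel of the evaluation `A → k`,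
   `x_{ij} ↦ g_{ij}`, `t ↦ c`, `s ↦ c⁻¹` (i.e. the kernel of the induced map
   `R → k`).  For a maximal (hence prime) ideal `m` of `R` and an ideal power
   `m^a`, an element `h ∈ R` lies in `m^a·R_m` in the localization `R_m` iff
   `u·h ∈ m^a` for some `u ∉ m`; we use this characterization to express the
   order of vanishing without invoking localization instances. -/

set_option synthInstance.maxHeartbeats 1000000
set_option maxHeartbeats 1000000

namespace Stmt12

open MvPolynomial Matrix

variable (k : Type*) [Field k] (n : ℕ)

/-- The n×n antidiagonal matrix `J` over a commutative ring. -/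
def J (R : Type*) [CommRing R] : Matrix (Fin n) (Fin n) R :=
  fun i j => if i.val + j.val + 1 = n then 1 else 0

/-- The symplectic form matrix `Ω = [[0, −J], [J, 0]]`. -/
def Ω (R : Type*) [CommRing R] : Matrix (Fin n ⊕ Fin n) (Fin n ⊕ Fin n) R :=
  Matrix.fromBlocks 0 (-(J n R)) (J n R) 0

/-- Variable index type: `x_{ij}`, `t`, `s`. -/
abbrev Var (n : ℕ) : Type :=
  ((Fin n ⊕ Fin n) × (Fin n ⊕ Fin n)) ⊕ Bool

/-- The generic matrix `X = (x_{ij})`. -/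
noncomputable def genX :
    Matrix (Fin n ⊕ Fin n) (Fin n ⊕ Fin n) (MvPolynomial (Var n) k) :=
  fun i j => X (Sum.inl (i, j))

/-- The variable `t`. -/
noncomputable def tVar : MvPolynomial (Var n) k := X (Sum.inr false)

/-- The variable `s`. -/
noncomputable def sVar : MvPolynomial (Var n) k := X (Sum.inr true)

/-- The ideal `I` generated by the entries of `Xᵀ Ω X − t·Ω` and `t·s − 1`. -/
noncomputable def I : Ideal (MvPolynomial (Var n) k) :=
  Ideal.span
    ((Set.range fun p : (Fin n ⊕ Fin n) × (Fin n ⊕ Fin n) =>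
        ((genX k n)ᵀ * Ω n (MvPolynomial (Var n) k) * genX k n
          - tVar k n • Ω n (MvPolynomial (Var n) k)) p.1 p.2) ∪
      {tVar k n * sVar k n - 1})

/-- The coordinate ring `R = A/I` of `GSp(2n)`. -/
abbrev R : Type _ := MvPolynomial (Var n) k ⧸ I k n

/-- Evaluation `A → k` at the point `(g, c)`: `x_{ij} ↦ g_{ij}`, `t ↦ c`, `s ↦ c⁻¹`. -/
noncomputable def evalPt (g : Matrix (Fin n ⊕ Fin n) (Fin n ⊕ Fin n) k) (c : kˣ) :
    MvPolynomial (Var n) k →+* k :=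
  MvPolynomial.eval (Sum.elim (fun p => g p.1 p.2) fun b => if b then (c : k)⁻¹ else (c : k))

/-- The maximal ideal of `R` at the point `(g, c)`: the image in `R` of the kernel
of the evaluation map (equivalently, the kernel of the induced map `R → k`). -/
noncomputable def mIdeal (g : Matrix (Fin n ⊕ Fin n) (Fin n ⊕ Fin n) k) (c : kˣ) :
    Ideal (R k n) :=
  Ideal.map (Ideal.Quotient.mk (I k n)) (RingHom.ker (evalPt k n g c))

/-- The Hasse invariant `h ∈ R`: the image of `det((x_{ij})_{1 ≤ i,j ≤ n})`. -/
noncomputable def hasse : R k n :=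
  Ideal.Quotient.mk (I k n)
    (Matrix.det fun i j : Fin n => (X (Sum.inl (Sum.inl i, Sum.inl j)) : MvPolynomial (Var n) k))

theorem J_mul_J (R : Type*) [CommRing R] : J n R * J n R = 1 := by
  ext i j
  rw [Matrix.mul_apply]
  simp only [J, Matrix.one_apply]
  have hi := i.isLt
  rw [Finset.sum_eq_single (⟨n - 1 - i.val, by omega⟩ : Fin n)]
  · have h1 : i.val + (n - 1 - i.val) + 1 = n := by omega
    simp only [h1, if_true, one_mul]
    congr 1
    rw [Fin.ext_iff, eq_iff_iff]
    omega
  · intro b _ hb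
    have : ¬ (i.val + b.val + 1 = n) := by
      intro h
      apply hb
      rw [Fin.ext_iff]
      simp only
      omega
    simp [this]
  · simp

theorem J_transpose (R : Type*) [CommRing R] : (J n R)ᵀ = J n R := by
  ext i j
  simp only [J, Matrix.transpose_apply, Nat.add_comm]

theorem J_map {R S : Type*} [CommRing R] [CommRing S] (f : R →+* S) :
    (J n R).map f = J n S := by
  ext i j
  simp only [J, Matrix.map_apply]
  split_ifs <;> simp

theorem Omega_map {R S : Type*} [CommRing R] [CommRing S] (f : R →+* S) :
    (Ω n R).map f = Ω n S := by
  have h : (-(J n R)).map f = -(J n S) := by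
    rw [← J_map n f]; ext i j; simp
  simp only [Ω, Matrix.fromBlocks_map, J_map, h]
  simp

theorem Omega_mul_Omega (R : Type*) [CommRing R] : Ω n R * Ω n R = -1 := by
  simp [Ω, Matrix.fromBlocks_multiply, J_mul_J, ← Matrix.fromBlocks_one, Matrix.fromBlocks_neg]

theorem isUnit_det_J (R : Type*) [CommRing R] : IsUnit (J n R).det := by
  have h := congrArg Matrix.det (J_mul_J n R)
  rw [Matrix.det_mul, Matrix.det_one] at h
  exact IsUnit.of_mul_eq_one _ h

theorem det_mem_pow {T : Type*} [CommRing T] (m : Ideal T) (M : Matrix (Fin n) (Fin n) T)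
    (Z : Finset (Fin n)) (h : ∀ i, ∀ j ∈ Z, M i j ∈ m) : M.det ∈ m ^ Z.card := by
  classical
  rw [Matrix.det_apply]
  refine Ideal.sum_mem _ fun σ _ => ?_
  have : ∏ i, M (σ i) i ∈ ∏ i : Fin n, (if i ∈ Z then m else (1 : Ideal T)) := by
    refine Ideal.prod_mem_prod fun i _ => ?_
    split_ifs with hi
    · exact h _ _ hi
    · simp
  rw [Finset.prod_ite_mem] at this
  simp only [Finset.univ_inter, Finset.prod_const] at this
  rw [Units.smul_def]
  exact zsmul_mem this _

open Classical in
theorem exists_diag (A : Matrix (Fin n) (Fin n) k) :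
    ∃ (P Q : Matrix (Fin n) (Fin n) k) (d : Fin n → k), P.det = 1 ∧ Q.det = 1 ∧
      P * A * Q = Matrix.diagonal d ∧
      (Finset.univ.filter fun i => d i = 0).card = n - A.rank := by
  classical
  obtain ⟨L, L', d, h⟩ := Matrix.Pivot.exists_list_transvec_mul_mul_list_transvec_eq_diagonal A
  refine ⟨_, _, d, ?_, ?_, h, ?_⟩
  · exact Matrix.TransvectionStruct.det_toMatrix_prod L
  · exact Matrix.TransvectionStruct.det_toMatrix_prod L'
  · have hr : A.rank = (Matrix.diagonal d).rank := by
      rw [← h, Matrix.rank_mul_eq_left_of_isUnit_det, Matrix.rank_mul_eq_right_of_isUnit_det]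
      · rw [Matrix.TransvectionStruct.det_toMatrix_prod]; exact isUnit_one
      · rw [Matrix.TransvectionStruct.det_toMatrix_prod]; exact isUnit_one
    rw [hr, Matrix.rank_diagonal, Fintype.card_subtype]
    have := Finset.card_filter_add_card_filter_not (s := (Finset.univ : Finset (Fin n)))
      (fun i => d i = 0)
    simp only [Finset.card_univ, Fintype.card_fin] at this
    refine (Nat.sub_eq_of_eq_add ?_).symm
    refine this.symm.trans ?_
    congr!

theorem core (A B : Matrix (Fin n) (Fin n) k) (hsym : Aᵀ * B = Bᵀ * A)
    (hinj : ∀ v : Fin n → k, A *ᵥ v = 0 → B *ᵥ v = 0 → v = 0) :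
    ∃ (S : Matrix (Fin n) (Fin n) k) (a : k), Sᵀ = S ∧ a ≠ 0 ∧
      (A.map Polynomial.C + (Polynomial.X : Polynomial k) • (S * B).map Polynomial.C).det =
        Polynomial.C a * Polynomial.X ^ (n - A.rank) := by
  classical
  obtain ⟨P, Q, d, hP, hQ, hd, hcard⟩ := exists_diag k n A
  have hPu : IsUnit P.det := by rw [hP]; exact isUnit_one
  have hQu : IsUnit Q.det := by rw [hQ]; exact isUnit_one
  have hPtu : IsUnit Pᵀ.det := by rw [Matrix.det_transpose]; exact hPu
  set D : Matrix (Fin n) (Fin n) k := Matrix.diagonal fun i => if d i = 0 then 1 else 0 with hD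
  set E : Matrix (Fin n) (Fin n) k := Matrix.diagonal fun i => if d i = 0 then 0 else 1 with hE
  set B' := (P⁻¹)ᵀ * B * Q with hB'
  have hPP : P * P⁻¹ = 1 := Matrix.mul_nonsing_inv _ hPu
  have hPP' : P⁻¹ * P = 1 := Matrix.nonsing_inv_mul _ hPu
  have hPt : Pᵀ * (P⁻¹)ᵀ = 1 := by rw [← Matrix.transpose_mul, hPP', Matrix.transpose_one]
  have hQQ : Q * Q⁻¹ = 1 := Matrix.mul_nonsing_inv _ hQu
  have hsym' : Matrix.diagonal d * B' = B'ᵀ * Matrix.diagonal d := by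
    have h1 : (Matrix.diagonal d)ᵀ * B' = Qᵀ * (Aᵀ * B) * Q := by
      rw [← hd, hB']
      simp only [Matrix.transpose_mul, Matrix.mul_assoc]
      rw [← Matrix.mul_assoc Pᵀ, hPt, Matrix.one_mul]
    have h2 : B'ᵀ * Matrix.diagonal d = Qᵀ * (Bᵀ * A) * Q := by
      rw [← hd, hB']
      simp only [Matrix.transpose_mul, Matrix.mul_assoc, Matrix.transpose_transpose]
      rw [← Matrix.mul_assoc P⁻¹, hPP', Matrix.one_mul]
    rw [Matrix.diagonal_transpose] at h1
    rw [h1, h2, hsym]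
  have hinj' : ∀ v : Fin n → k, Matrix.diagonal d *ᵥ v = 0 → B' *ᵥ v = 0 → v = 0 := by
    intro v h1 h2
    have h3 : Q *ᵥ v = 0 := by
      apply hinj
      · have : P⁻¹ *ᵥ (Matrix.diagonal d *ᵥ v) = 0 := by rw [h1, Matrix.mulVec_zero]
        rw [← hd, Matrix.mulVec_mulVec, Matrix.mul_assoc, ← Matrix.mul_assoc P⁻¹, hPP',
          Matrix.one_mul] at this
        rw [Matrix.mulVec_mulVec, this]
      · have : Pᵀ *ᵥ (B' *ᵥ v) = 0 := by rw [h2, Matrix.mulVec_zero]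
        rw [hB', Matrix.mulVec_mulVec, Matrix.mul_assoc, ← Matrix.mul_assoc Pᵀ, hPt,
          Matrix.one_mul] at this
        rw [Matrix.mulVec_mulVec, this]
    have : Q⁻¹ *ᵥ (Q *ᵥ v) = 0 := by rw [h3, Matrix.mulVec_zero]
    rwa [Matrix.mulVec_mulVec, Matrix.nonsing_inv_mul _ hQu, Matrix.one_mulVec] at this
  have hdet : (E + D * B').det ≠ 0 := by
    intro h0
    obtain ⟨v, hv0, hv⟩ := Matrix.exists_mulVec_eq_zero_iff.mpr h0
    apply hv0
    have hc : ∀ i, d i * v i = 0 ∧ (d i = 0 → (B' *ᵥ v) i = 0) := by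
      intro i
      have := congrFun hv i
      rw [Matrix.add_mulVec, ← Matrix.mulVec_mulVec, hE, hD, Pi.add_apply,
        Matrix.mulVec_diagonal, Matrix.mulVec_diagonal] at this
      by_cases hi : d i = 0
      · simp [hi] at this; simp [hi, this]
      · simp [hi] at this; simp [hi, this]
    have hdv : Matrix.diagonal d *ᵥ v = 0 := by
      ext i; rw [Matrix.mulVec_diagonal]; exact (hc i).1
    apply hinj' v hdv
    have h5 : Matrix.diagonal d *ᵥ (B' *ᵥ v) = 0 := by
      rw [Matrix.mulVec_mulVec, hsym', ← Matrix.mulVec_mulVec, hdv, Matrix.mulVec_zero]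
    ext i
    by_cases hi : d i = 0
    · exact (hc i).2 hi
    · have := congrFun h5 i
      rw [Matrix.mulVec_diagonal] at this
      simpa [hi] using this
  refine ⟨P⁻¹ * D * (P⁻¹)ᵀ, (∏ i, if d i = 0 then 1 else d i) * (E + D * B').det, ?_, ?_, ?_⟩
  · simp [Matrix.transpose_mul, hD, Matrix.mul_assoc]
  · refine mul_ne_zero (Finset.prod_ne_zero_iff.mpr fun i _ => ?_) hdet
    split_ifs with h
    · exact one_ne_zero
    · exact h
  · have key : P.map Polynomial.C * (A.map Polynomial.C + (Polynomial.X : Polynomial k) •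
        ((P⁻¹ * D * (P⁻¹)ᵀ) * B).map Polynomial.C) * Q.map Polynomial.C =
        (Matrix.diagonal fun i => if d i = 0 then (Polynomial.X : Polynomial k) else
          Polynomial.C (d i)) * (E + D * B').map Polynomial.C := by
      rw [Matrix.mul_add, Matrix.add_mul, Matrix.mul_smul, Matrix.smul_mul]
      simp only [← Matrix.map_mul]
      have : P * (P⁻¹ * D * (P⁻¹)ᵀ * B) * Q = D * B' := by
        rw [hB']
        simp only [← Matrix.mul_assoc]
        rw [hPP, Matrix.one_mul]
      rw [hd, this]
      ext1 i j
      rw [Matrix.diagonal_mul, hD, hE]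
      by_cases hi : d i = 0
      · by_cases hij : i = j
        · subst hij; simp [hi, Matrix.diagonal_mul]
        · simp [hi, hij, Matrix.diagonal_mul]
      · by_cases hij : i = j
        · subst hij; simp [hi, Matrix.diagonal_mul]
        · simp [hi, hij, Matrix.diagonal_mul]
    have hm : ∀ M : Matrix (Fin n) (Fin n) k,
        (M.map Polynomial.C).det = Polynomial.C M.det := fun M => by
      rw [RingHom.map_det]; rfl
    have := congrArg Matrix.det key
    rw [Matrix.det_mul, Matrix.det_mul, Matrix.det_mul, hm, hm, hm, hP, hQ, Polynomial.C_1,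
      one_mul, mul_one] at this
    rw [this, Matrix.det_diagonal, ← hcard, Polynomial.C_mul]
    have hp : (∏ i, if d i = 0 then (Polynomial.X : Polynomial k) else Polynomial.C (d i)) =
        Polynomial.C (∏ i, if d i = 0 then 1 else d i) *
          Polynomial.X ^ (Finset.univ.filter fun i => d i = 0).card := by
      rw [Finset.card_eq_sum_ones, Finset.sum_filter, ← Finset.prod_pow_eq_pow_sum, map_prod,
        ← Finset.prod_mul_distrib]
      refine Finset.prod_congr rfl fun i _ => ?_
      split_ifs <;> simp
    rw [hp]; ring

theorem I_le_ker {T : Type*} [CommRing T] (f : MvPolynomial (Var n) k →+* T)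
    (G : Matrix (Fin n ⊕ Fin n) (Fin n ⊕ Fin n) T) (c c' : T) (hcc : c * c' = 1)
    (hX : ∀ i j, f (X (Sum.inl (i, j))) = G i j) (ht : f (X (Sum.inr false)) = c)
    (hs : f (X (Sum.inr true)) = c') (hG : Gᵀ * Ω n T * G = c • Ω n T) :
    I k n ≤ RingHom.ker f := by
  rw [I, Ideal.span_le]
  rintro _ (⟨⟨i, j⟩, rfl⟩ | rfl)
  · have hgen : (genX k n).map f = G := by
      ext i j; exact hX i j
    have : ((genX k n)ᵀ * Ω n (MvPolynomial (Var n) k) * genX k n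
          - tVar k n • Ω n (MvPolynomial (Var n) k)).map f = 0 := by
      rw [Matrix.map_sub f (map_sub f), Matrix.map_mul, Matrix.map_mul, Matrix.transpose_map,
        hgen, Omega_map, hG, sub_eq_zero, ← Omega_map n f]
      ext i j
      simp [tVar, ht]
    exact congrFun (congrFun this i) j
  · simp [tVar, sVar, ht, hs, hcc]

theorem evalPt_ker (g : Matrix (Fin n ⊕ Fin n) (Fin n ⊕ Fin n) k)
    (c : kˣ) (hgc : gᵀ * Ω n k * g = (c : k) • Ω n k) :
    I k n ≤ RingHom.ker (evalPt k n g c) := by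
  refine I_le_ker k n _ g (c : k) (c : k)⁻¹ (by simp) ?_ ?_ ?_ hgc <;> simp [evalPt]

theorem mem_mIdeal (g : Matrix (Fin n ⊕ Fin n) (Fin n ⊕ Fin n) k)
    (c : kˣ) (p : MvPolynomial (Var n) k) (hp : evalPt k n g c p = 0) :
    Ideal.Quotient.mk (I k n) p ∈ mIdeal k n g c :=
  Ideal.mem_map_of_mem _ hp

theorem mIdeal_isMaximal (g : Matrix (Fin n ⊕ Fin n) (Fin n ⊕ Fin n) k)
    (c : kˣ) (hgc : gᵀ * Ω n k * g = (c : k) • Ω n k) : (mIdeal k n g c).IsMaximal := by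
  have hmax : (RingHom.ker (evalPt k n g c)).IsMaximal :=
    RingHom.ker_isMaximal_of_surjective _ fun a => ⟨C a, by simp [evalPt]⟩
  exact Ideal.IsMaximal.map_of_surjective_of_ker_le Ideal.Quotient.mk_surjective
    (by rw [Ideal.mk_ker]; exact evalPt_ker k n g c hgc)

theorem upper (g : Matrix (Fin n ⊕ Fin n) (Fin n ⊕ Fin n) k) (c : kˣ) :
    hasse k n ∈ mIdeal k n g c ^ (n - g.toBlocks₁₁.rank) := by
  classical
  obtain ⟨P, Q, d, hP, hQ, hd, hcard⟩ := exists_diag k n g.toBlocks₁₁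
  rw [mIdeal, ← Ideal.map_pow]
  refine Ideal.mem_map_of_mem _ ?_
  set XA : Matrix (Fin n) (Fin n) (MvPolynomial (Var n) k) :=
    fun i j : Fin n => (X (Sum.inl (Sum.inl i, Sum.inl j)) : MvPolynomial (Var n) k) with hXA
  have h1 : (P.map C * XA * Q.map C).det = XA.det := by
    have hm : ∀ M : Matrix (Fin n) (Fin n) k,
        (M.map (C : k →+* MvPolynomial (Var n) k)).det = C M.det := fun M => by
      rw [RingHom.map_det]; rfl
    rw [Matrix.det_mul, Matrix.det_mul, hm, hm, hP, hQ]; simp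
  rw [← h1, ← hcard]
  apply det_mem_pow
  intro i j hj
  have h2 : (P.map C * XA * Q.map C).map (evalPt k n g c) = Matrix.diagonal d := by
    rw [← hd, Matrix.map_mul, Matrix.map_mul]
    congr 1
    · congr 1
      · ext i j; simp [evalPt]
      · ext i j
        rw [Matrix.map_apply]
        change evalPt k n g c (X (Sum.inl (Sum.inl i, Sum.inl j))) = _
        simp [evalPt, Matrix.toBlocks₁₁]
    · ext i j; simp [evalPt]
  have h3 := congrFun (congrFun h2 i) j
  rw [RingHom.mem_ker]
  rw [Matrix.map_apply] at h3
  rw [h3, Matrix.diagonal_apply]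
  split_ifs with h
  · subst h; simpa using hj
  · rfl

theorem lower (g : Matrix (Fin n ⊕ Fin n) (Fin n ⊕ Fin n) k) (hg : IsUnit g)
    (c : kˣ) (hgc : gᵀ * Ω n k * g = (c : k) • Ω n k) (u : R k n) (hu : u ∉ mIdeal k n g c) :
    u * hasse k n ∉ mIdeal k n g c ^ (n - g.toBlocks₁₁.rank + 1) := by
  have hblk := Matrix.fromBlocks_toBlocks g
  have hsym : (J n k * g.toBlocks₁₁)ᵀ * g.toBlocks₂₁ =
      g.toBlocks₂₁ᵀ * (J n k * g.toBlocks₁₁) := by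
    have h := hgc
    rw [← hblk] at h
    simp only [Ω, Matrix.fromBlocks_transpose, Matrix.fromBlocks_multiply,
      Matrix.fromBlocks_smul] at h
    have h11 := (Matrix.fromBlocks_inj.mp h).1
    simp only [Matrix.mul_zero, zero_add, add_zero, smul_zero, Matrix.mul_neg,
      Matrix.neg_mul] at h11
    rw [Matrix.transpose_mul, J_transpose, ← Matrix.mul_assoc]
    exact (add_neg_eq_zero.mp h11).symm
  have hinj : ∀ v : Fin n → k, (J n k * g.toBlocks₁₁) *ᵥ v = 0 → g.toBlocks₂₁ *ᵥ v = 0 →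
      v = 0 := by
    intro v h1 h2
    have h1' : g.toBlocks₁₁ *ᵥ v = 0 := by
      have : J n k *ᵥ ((J n k * g.toBlocks₁₁) *ᵥ v) = 0 := by rw [h1, Matrix.mulVec_zero]
      rwa [Matrix.mulVec_mulVec, ← Matrix.mul_assoc, J_mul_J, Matrix.one_mul] at this
    have h3 : g *ᵥ (Sum.elim v 0) = 0 := by
      rw [← hblk, Matrix.fromBlocks_mulVec]
      ext i
      rcases i with i | i
      · simpa using congrFun h1' i
      · simpa using congrFun h2 i
    have h4 := (Matrix.mulVec_injective_iff_isUnit.mpr hg) (h3.trans (Matrix.mulVec_zero g).symm)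
    ext i
    exact congrFun h4 (Sum.inl i)
  obtain ⟨S, a, hS, ha, hdet⟩ := core k n _ _ hsym hinj
  rw [Matrix.rank_mul_eq_right_of_isUnit_det _ _ (isUnit_det_J n k)] at hdet
  let U : Matrix (Fin n ⊕ Fin n) (Fin n ⊕ Fin n) (Polynomial k) :=
    Matrix.fromBlocks 1 ((Polynomial.X : Polynomial k) • (J n (Polynomial k) * S.map Polynomial.C))
      0 1
  have hU : Uᵀ * Ω n (Polynomial k) * U = Ω n (Polynomial k) := by
    have hS' : (S.map (Polynomial.C : k →+* Polynomial k))ᵀ = S.map Polynomial.C := by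
      rw [← Matrix.transpose_map, hS]
    simp only [U, Ω, Matrix.fromBlocks_transpose, Matrix.fromBlocks_multiply,
      Matrix.transpose_smul, Matrix.transpose_mul, hS', J_transpose]
    simp [Matrix.mul_assoc, J_mul_J, ← Matrix.mul_assoc (J n (Polynomial k)) (J n (Polynomial k))]
  let G := U * g.map Polynomial.C
  have hG : Gᵀ * Ω n (Polynomial k) * G = Polynomial.C (c : k) • Ω n (Polynomial k) := by
    have h1 : (g.map (Polynomial.C : k →+* Polynomial k))ᵀ * Ω n (Polynomial k) *
        g.map Polynomial.C = Polynomial.C (c : k) • Ω n (Polynomial k) := by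
      have := congrArg (fun M => Matrix.map M (Polynomial.C : k →+* Polynomial k)) hgc
      simp only [Matrix.map_mul, Omega_map, Matrix.transpose_map] at this
      rw [this, ← Omega_map n (Polynomial.C : k →+* Polynomial k)]
      ext1 i j
      simp
    calc Gᵀ * Ω n (Polynomial k) * G
        = (g.map (Polynomial.C : k →+* Polynomial k))ᵀ * (Uᵀ * Ω n (Polynomial k) * U) *
          g.map Polynomial.C := by
          simp only [G, Matrix.transpose_mul, Matrix.mul_assoc]
      _ = _ := by rw [hU, h1]
  let f : MvPolynomial (Var n) k →+* Polynomial k :=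
    MvPolynomial.eval₂Hom Polynomial.C (Sum.elim (fun p => G p.1 p.2)
      fun b => if b then Polynomial.C (c : k)⁻¹ else Polynomial.C (c : k))
  have hf : I k n ≤ RingHom.ker f := by
    refine I_le_ker k n f G (Polynomial.C (c : k)) (Polynomial.C (c : k)⁻¹) ?_ ?_ ?_ ?_ hG
    · rw [← Polynomial.C_mul]; simp
    · intro i j; simp [f]
    · simp [f]
    · simp [f]
  have hG0 : ∀ i j, (G i j).eval 0 = g i j := by
    intro i j
    have h1 : U.map (Polynomial.evalRingHom (0 : k)) = 1 := by
      simp only [U, Matrix.fromBlocks_map, ← Matrix.fromBlocks_one]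
      congr 1
      · simp
      · ext i j; simp
      · simp
      · simp
    have h2 : G.map (Polynomial.evalRingHom (0 : k)) = g := by
      simp only [G, Matrix.map_mul, h1, Matrix.one_mul]
      ext i j; simp
    exact congrFun (congrFun h2 i) j
  have heval : ∀ p, (f p).eval 0 = evalPt k n g c p := by
    intro p
    have : (Polynomial.evalRingHom (0 : k)).comp f = evalPt k n g c := by
      apply MvPolynomial.ringHom_ext
      · intro r; simp [f, evalPt]
      · rintro (⟨i, j⟩ | b)
        · simp [f, evalPt, hG0]
        · cases b <;> simp [f, evalPt]
    exact congrArg (fun φ => φ p) this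
  let φ : R k n →+* Polynomial k := Ideal.Quotient.lift (I k n) f fun a ha => hf ha
  have hφ : ∀ p, φ (Ideal.Quotient.mk (I k n) p) = f p := fun p => Ideal.Quotient.lift_mk _ _ _
  have hφm : (mIdeal k n g c).map φ ≤ Ideal.span {(Polynomial.X : Polynomial k)} := by
    rw [mIdeal, Ideal.map_map, Ideal.map_le_iff_le_comap]
    intro p hp
    rw [Ideal.mem_comap, RingHom.comp_apply, hφ, Ideal.mem_span_singleton, Polynomial.X_dvd_iff,
      Polynomial.coeff_zero_eq_eval_zero, heval]
    exact hp
  have hφu : ¬ (Polynomial.X : Polynomial k) ∣ φ u := by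
    obtain ⟨p, rfl⟩ := Ideal.Quotient.mk_surjective u
    rw [hφ, Polynomial.X_dvd_iff, Polynomial.coeff_zero_eq_eval_zero, heval]
    exact fun h => hu (mem_mIdeal k n g c p h)
  have hφh : (J n (Polynomial k)).det * φ (hasse k n) =
      Polynomial.C a * Polynomial.X ^ (n - g.toBlocks₁₁.rank) := by
    let XA : Matrix (Fin n) (Fin n) (MvPolynomial (Var n) k) := Matrix.of fun i j =>
      (X (Sum.inl (Sum.inl i, Sum.inl j)) : MvPolynomial (Var n) k)
    have h0 : φ (hasse k n) = (f.mapMatrix XA).det := by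
      rw [← RingHom.map_det]
      exact hφ _
    rw [← hdet, h0, ← Matrix.det_mul]
    congr 1
    have h1 : f.mapMatrix XA = G.toBlocks₁₁ := by
      ext1 i j
      simp [f, XA, Matrix.toBlocks₁₁]
    have h2 : G.toBlocks₁₁ = g.toBlocks₁₁.map Polynomial.C + (Polynomial.X : Polynomial k) •
        (J n (Polynomial k) * S.map Polynomial.C * g.toBlocks₂₁.map Polynomial.C) := by
      have : G = U * (Matrix.fromBlocks g.toBlocks₁₁ g.toBlocks₁₂ g.toBlocks₂₁
        g.toBlocks₂₂).map Polynomial.C := by rw [hblk]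
      rw [this]
      simp only [U, Matrix.fromBlocks_map, Matrix.fromBlocks_multiply,
        Matrix.toBlocks_fromBlocks₁₁, Matrix.one_mul, Matrix.smul_mul]
    rw [h1, h2, Matrix.mul_add, Matrix.mul_smul, Matrix.map_mul, Matrix.map_mul, J_map]
    simp only [← Matrix.mul_assoc, J_mul_J, Matrix.one_mul]
  intro hmem
  have h1 := Ideal.mem_map_of_mem φ hmem
  rw [Ideal.map_pow] at h1
  have h2 := Ideal.pow_right_mono hφm _ h1
  rw [Ideal.span_singleton_pow, Ideal.mem_span_singleton, map_mul] at h2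
  have h3 : (Polynomial.X : Polynomial k) ^ (n - g.toBlocks₁₁.rank + 1) ∣
      (Polynomial.C a * φ u) * Polynomial.X ^ (n - g.toBlocks₁₁.rank) := by
    have h4 : (Polynomial.C a * φ u) * Polynomial.X ^ (n - g.toBlocks₁₁.rank) =
        (J n (Polynomial k)).det * (φ u * φ (hasse k n)) := by
      rw [mul_left_comm, hφh]; ring
    rw [h4]
    exact Dvd.dvd.mul_left h2 _
  rw [pow_succ'] at h3
  have h5 := (mul_dvd_mul_iff_right (pow_ne_zero _ Polynomial.X_ne_zero)).mp h3
  rcases Polynomial.prime_X.dvd_or_dvd h5 with h | h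
  · rw [Polynomial.X_dvd_iff, Polynomial.coeff_C_zero] at h
    exact ha h
  · exact hφu h

theorem exists_rank (i : ℕ) (hi : i ≤ n) :
    ∃ (g' : Matrix (Fin n ⊕ Fin n) (Fin n ⊕ Fin n) k) (c' : kˣ),
        IsUnit g' ∧ g'ᵀ * Ω n k * g' = (c' : k) • Ω n k ∧
        g'.toBlocks₁₁.rank = i := by
  classical
  let E : Matrix (Fin n) (Fin n) k := Matrix.diagonal fun j => if j.val < i then 1 else 0
  let D : Matrix (Fin n) (Fin n) k := Matrix.diagonal fun j => if j.val < i then 0 else 1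
  have hEE : E * E = E := by
    simp only [E, Matrix.diagonal_mul_diagonal]; congr 1; ext j; split_ifs <;> simp
  have hDD : D * D = D := by
    simp only [D, Matrix.diagonal_mul_diagonal]; congr 1; ext j; split_ifs <;> simp
  have hED : E * D = 0 := by
    simp only [E, D, Matrix.diagonal_mul_diagonal, ← Matrix.diagonal_zero]
    congr 1; ext j; split_ifs <;> simp
  have hDE : D * E = 0 := by
    simp only [E, D, Matrix.diagonal_mul_diagonal, ← Matrix.diagonal_zero]
    congr 1; ext j; split_ifs <;> simp
  have hsum : E + D = 1 := by
    simp only [E, D, Matrix.diagonal_add, ← Matrix.diagonal_one]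
    congr 1; ext j; split_ifs <;> simp
  have hEt : Eᵀ = E := Matrix.diagonal_transpose _
  have hDt : Dᵀ = D := Matrix.diagonal_transpose _
  have hJJ : ∀ M : Matrix (Fin n) (Fin n) k, J n k * (J n k * M) = M := fun M => by
    rw [← Matrix.mul_assoc, J_mul_J, Matrix.one_mul]
  have e1 : ∀ M : Matrix (Fin n) (Fin n) k, E * (E * M) = E * M := fun M => by
    rw [← Matrix.mul_assoc, hEE]
  have e2 : ∀ M : Matrix (Fin n) (Fin n) k, D * (D * M) = D * M := fun M => by
    rw [← Matrix.mul_assoc, hDD]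
  have e3 : ∀ M : Matrix (Fin n) (Fin n) k, E * (D * M) = 0 := fun M => by
    rw [← Matrix.mul_assoc, hED, Matrix.zero_mul]
  have e4 : ∀ M : Matrix (Fin n) (Fin n) k, D * (E * M) = 0 := fun M => by
    rw [← Matrix.mul_assoc, hDE, Matrix.zero_mul]
  let g' := Matrix.fromBlocks (J n k * E) (-(J n k * (D * J n k))) D (E * J n k)
  have hsp : g'ᵀ * Ω n k * g' = Ω n k := by
    have s1 : D * J n k + E * J n k = J n k := by
      rw [← Matrix.add_mul, add_comm, hsum, Matrix.one_mul]
    have s2 : J n k * E + J n k * D = J n k := by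
      rw [← Matrix.mul_add, hsum, Matrix.mul_one]
    simp only [g', Ω, Matrix.fromBlocks_transpose, Matrix.fromBlocks_multiply,
      Matrix.transpose_mul, Matrix.transpose_neg, hEt, hDt, J_transpose, Matrix.mul_zero, zero_add,
      add_zero, Matrix.mul_neg, Matrix.neg_mul, neg_neg, Matrix.mul_assoc, hJJ, e1, e2, e3, e4, hEE,
      hDD, hED, hDE, neg_zero]
    rw [s2, ← neg_add, s1]
  refine ⟨g', 1, ?_, ?_, ?_⟩
  · have : (-(Ω n k * g'ᵀ * Ω n k)) * g' = 1 := by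
      rw [Matrix.neg_mul, Matrix.mul_assoc, Matrix.mul_assoc, ← Matrix.mul_assoc g'ᵀ, hsp,
        Omega_mul_Omega, neg_neg]
    exact IsUnit.of_mul_eq_one_right _ this
  · rw [hsp]; simp
  · simp only [g', Matrix.toBlocks_fromBlocks₁₁]
    rw [Matrix.rank_mul_eq_right_of_isUnit_det _ _ (isUnit_det_J n k), Matrix.rank_diagonal,
      Fintype.card_subtype]
    have : (Finset.univ.filter fun j : Fin n => (if j.val < i then (1 : k) else 0) ≠ 0) =
        Finset.univ.filter fun j : Fin n => j.val < i := by
      ext j; simp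
    rw [this, Fin.card_filter_val_lt]
    omega

theorem hasse_order [IsAlgClosed k] (hn : 1 ≤ n)
    (g : Matrix (Fin n ⊕ Fin n) (Fin n ⊕ Fin n) k) (hg : IsUnit g)
    (c : kˣ) (hgc : gᵀ * Ω n k * g = (c : k) • Ω n k) :
    (mIdeal k n g c).IsMaximal ∧
    -- `h ∈ m^{n−r}·R_m` :
    (∃ u ∉ mIdeal k n g c,
        u * hasse k n ∈ mIdeal k n g c ^ (n - g.toBlocks₁₁.rank)) ∧
    -- `h ∉ m^{n−r+1}·R_m` :
    (∀ u ∉ mIdeal k n g c,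
        u * hasse k n ∉ mIdeal k n g c ^ (n - g.toBlocks₁₁.rank + 1)) ∧
    -- every rank `0 ≤ i ≤ n` is achieved by some point of `GSp(2n, k)` :
    (∀ i ≤ n, ∃ (g' : Matrix (Fin n ⊕ Fin n) (Fin n ⊕ Fin n) k) (c' : kˣ),
        IsUnit g' ∧ g'ᵀ * Ω n k * g' = (c' : k) • Ω n k ∧
        g'.toBlocks₁₁.rank = i) := by
  exact ⟨mIdeal_isMaximal k n g c hgc,
    ⟨1, (Ideal.ne_top_iff_one _).mp (mIdeal_isMaximal k n g c hgc).ne_top,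
      by rw [one_mul]; exact upper k n g c⟩,
    fun u hu => lower k n g hg c hgc u hu, fun i hi => exists_rank k n i hi⟩

end Stmt12
end

section
/- Let k be a field, n ≥ 2, and let c_1, …, c_{n−1} be natural numbers; set f = ∏_{i=1}^{n−1} Δ_i^{c_i} : Mat_n(k) → k. Let a, b ∈ {1, …, n−1} with a ≠ b, let τ_a = (a, a+1) and τ_b = (b, b+1), and let w = τ_a ∘ τ_b ∘ τ_a ∈ S_n. Then for every g ∈ B⁺ P_w B, the order of vanishing of f at g equals c_{n−b} + c_{n−a} if |a − b| = 1, and equals c_{n−b} if |a − b| ≥ 2. (This instantiates, for GL(n), the formula ord = ⟨λ, β∨⟩ + ⟨λ, α∨⟩·min{2, −⟨α, β∨⟩} for the vanishing order of a highest weight vector on the cell B⁺ s_α s_β s_α B.) -/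
/- STATEMENT 17: order of vanishing of `f = ∏ Δ_i^{c_i}` on the Bruhat cell
   `B⁺ P_w B` for `w = τ_a ∘ τ_b ∘ τ_a` with `a ≠ b`: it equals
   `c_{n−b} + c_{n−a}` if `|a − b| = 1` and `c_{n−b}` if `|a − b| ≥ 2`.

   Conventions: permutations of `{1, …, n}` are modelled as `Equiv.Perm ℕ`;
   matrices are indexed by `Fin n` (0-based): the permutation matrix of `w` is
   `P i j = 1` if `w(j+1) = i+1`, `Δ_i` is the determinant of the lower-right
   i×i corner, and the order of vanishing of `f` at `g` is the minimal total
   degree of a monomial of the polynomial `f(g + X) ∈ k[x_{ij}]`. -/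

namespace Stmt17

open MvPolynomial

/-- The simple transposition `τ_b = (b, b+1)`. -/
def τ (b : ℕ) : Equiv.Perm ℕ := Equiv.swap b (b + 1)

/-- `Δ_i`: determinant of the lower-right i×i corner (rows and columns
`n−i+1, …, n` in 1-based terms). -/
noncomputable def delta {k : Type*} [CommRing k] {n : ℕ} (i : ℕ)
    (M : Matrix (Fin n) (Fin n) k) : k :=
  if hn : 0 < n then
    (M.submatrix (fun t : Fin i => (⟨(n - i + t.val) % n, Nat.mod_lt _ hn⟩ : Fin n))
                 (fun t : Fin i => (⟨(n - i + t.val) % n, Nat.mod_lt _ hn⟩ : Fin n))).det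
  else 0

/-- The generic matrix `g + X` over `k[x_{ij}]`. -/
noncomputable def genMat {k : Type*} [CommRing k] {n : ℕ}
    (g : Matrix (Fin n) (Fin n) k) :
    Matrix (Fin n) (Fin n) (MvPolynomial (Fin n × Fin n) k) :=
  fun p q => MvPolynomial.C (g p q) + MvPolynomial.X (p, q)

/-- The polynomial `f(g + X) = ∏_{i=1}^{n−1} Δ_i(g + X)^{c_i}`. -/
noncomputable def fAt {k : Type*} [CommRing k] {n : ℕ} (c : ℕ → ℕ)
    (g : Matrix (Fin n) (Fin n) k) : MvPolynomial (Fin n × Fin n) k :=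
  ∏ i ∈ Finset.Icc 1 (n - 1), delta i (genMat g) ^ c i

/-- Minimum total degree of a monomial with nonzero coefficient. -/
noncomputable def ord {σ : Type*} {k : Type*} [CommSemiring k]
    (P : MvPolynomial σ k) : ℕ :=
  sInf ((fun s : σ →₀ ℕ => s.sum fun _ e => e) '' (P.support : Set (σ →₀ ℕ)))

/-- The permutation matrix of `w` (in 0-based matrix indices). -/
def Pmat (k : Type*) [CommRing k] (n : ℕ) (σ : Equiv.Perm ℕ) :
    Matrix (Fin n) (Fin n) k :=
  fun i j => if σ (j.val + 1) = i.val + 1 then 1 else 0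

def idx {n : ℕ} (i : ℕ) (hi : i ≤ n) (t : Fin i) : Fin n := ⟨n - i + t.val, by omega⟩

lemma delta_eq {R : Type*} [CommRing R] {n : ℕ} (hn : 0 < n) (i : ℕ) (hi : i ≤ n)
    (M : Matrix (Fin n) (Fin n) R) :
    delta i M = (M.submatrix (idx i hi) (idx i hi)).det := by
  have h : (fun t : Fin i => (⟨(n - i + t.val) % n, Nat.mod_lt _ hn⟩ : Fin n)) = idx i hi := by
    funext t
    apply Fin.ext
    simp only [idx]
    exact Nat.mod_eq_of_lt (by omega)
  rw [delta, dif_pos hn, h]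

lemma idx_inj {n : ℕ} (i : ℕ) (hi : i ≤ n) : Function.Injective (idx (n := n) i hi) := by
  intro s t h
  have := congrArg Fin.val h
  simp only [idx] at this
  exact Fin.ext (by omega)

lemma lt_of_not_range {n : ℕ} (i : ℕ) (hi : i ≤ n) (q : Fin n)
    (h : q ∉ Set.range (idx (n := n) i hi)) (p : Fin i) : q < idx i hi p := by
  by_contra hc
  apply h
  have h1 : n - i + p.val ≤ q.val := by
    simpa [Fin.lt_def, idx] using hc
  exact ⟨⟨q.val - (n - i), by omega⟩, Fin.ext (by simp only [idx]; omega)⟩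

lemma delta_mul {R : Type*} [CommRing R] {n : ℕ} (hn : 0 < n) (i : ℕ) (hi : i ≤ n)
    (U M L : Matrix (Fin n) (Fin n) R)
    (hU : ∀ p q : Fin n, q < p → U p q = 0) (hL : ∀ p q : Fin n, p < q → L p q = 0) :
    delta i (U * M * L) = delta i U * delta i M * delta i L := by
  simp only [delta_eq hn i hi]
  rw [← Matrix.det_mul, ← Matrix.det_mul]
  congr 1
  ext p q
  simp only [Matrix.submatrix_apply, Matrix.mul_apply]
  symm
  apply Fintype.sum_of_injective (idx i hi) (idx_inj i hi)
  · intro j hj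
    rw [hL _ _ (lt_of_not_range i hi j hj q), mul_zero]
  · intro t
    congr 1
    apply Fintype.sum_of_injective (idx i hi) (idx_inj i hi)
    · intro j hj
      rw [hU _ _ (lt_of_not_range i hi j hj p), zero_mul]
    · intro s
      rfl

lemma delta_map {R S : Type*} [CommRing R] [CommRing S] (f : R →+* S) {n : ℕ} (hn : 0 < n) (i : ℕ)
    (hi : i ≤ n) (M : Matrix (Fin n) (Fin n) R) : delta i (M.map f) = f (delta i M) := by
  rw [delta_eq hn i hi, delta_eq hn i hi, RingHom.map_det]
  rfl

lemma delta_upper_ne {k : Type*} [Field k] {n : ℕ} (hn : 0 < n) (i : ℕ) (hi : i ≤ n)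
    (U : Matrix (Fin n) (Fin n) k) (hu : IsUnit U) (hU : ∀ p q : Fin n, q < p → U p q = 0) :
    delta i U ≠ 0 := by
  have hd : U.det ≠ 0 := ((Matrix.isUnit_iff_isUnit_det U).1 hu).ne_zero
  rw [Matrix.det_of_isUpperTriangular (fun p q h => hU p q h)] at hd
  rw [delta_eq hn i hi, Matrix.det_of_isUpperTriangular]
  · rw [Finset.prod_ne_zero_iff] at hd ⊢
    intro t _
    exact hd _ (Finset.mem_univ _)
  · intro p q h
    apply hU
    simp only [id, idx, Fin.lt_def] at h ⊢
    omega

lemma delta_transpose {R : Type*} [CommRing R] {n : ℕ} (hn : 0 < n) (i : ℕ) (hi : i ≤ n)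
    (M : Matrix (Fin n) (Fin n) R) : delta i M.transpose = delta i M := by
  rw [delta_eq hn i hi, delta_eq hn i hi, ← Matrix.det_transpose]
  rfl

lemma delta_lower_ne {k : Type*} [Field k] {n : ℕ} (hn : 0 < n) (i : ℕ) (hi : i ≤ n)
    (L : Matrix (Fin n) (Fin n) k) (hu : IsUnit L) (hL : ∀ p q : Fin n, p < q → L p q = 0) :
    delta i L ≠ 0 := by
  rw [← delta_transpose hn i hi]
  apply delta_upper_ne hn i hi
  · rw [Matrix.isUnit_iff_isUnit_det, Matrix.det_transpose, ← Matrix.isUnit_iff_isUnit_det]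
    exact hu
  · intro p q h
    exact hL q p h

/-- The matrix unit at the (1-based) diagonal position `m`. -/
def Emat (k : Type*) [CommRing k] (n m : ℕ) : Matrix (Fin n) (Fin n) k :=
  fun p q => if p.val + 1 = m ∧ q.val + 1 = m then 1 else 0

noncomputable def lineMat (k : Type*) [CommRing k] (n l m : ℕ) :
    Matrix (Fin n) (Fin n) (Polynomial k) :=
  (Pmat k n (Equiv.swap l m)).map Polynomial.C
    + (Polynomial.X : Polynomial k) • (Emat k n m).map Polynomial.C

def dd (n l m i : ℕ) : ℕ := if l ≤ n - i ∧ n - i < m then 1 else 0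

lemma delta_Pmat_ne (k : Type*) [Field k] {n : ℕ} (hn : 0 < n) (l m i : ℕ) (hi : i ≤ n)
    (hl : 1 ≤ l) (hlm : l < m) (hm : m ≤ n) (h : ¬ (l ≤ n - i ∧ n - i < m)) :
    delta i (Pmat k n (Equiv.swap l m)) ≠ 0 := by
  rw [delta_eq hn i hi]
  by_cases h1 : m ≤ n - i
  · have : (Pmat k n (Equiv.swap l m)).submatrix (idx i hi) (idx i hi) = 1 := by
      ext p q
      simp only [Matrix.submatrix_apply, Pmat, idx, Matrix.one_apply, Fin.ext_iff,
        Equiv.swap_apply_def]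
      split_ifs <;> first | rfl | (exfalso; omega)
    rw [this, Matrix.det_one]
    exact one_ne_zero
  · have h2 : n - i < l := by omega
    have : (Pmat k n (Equiv.swap l m)).submatrix (idx i hi) (idx i hi) =
        (Equiv.swap (⟨l - 1 - (n - i), by omega⟩ : Fin i) ⟨m - 1 - (n - i), by omega⟩).permMatrix k
        := by
      ext p q
      simp only [Matrix.submatrix_apply, Pmat, idx, Equiv.Perm.permMatrix, PEquiv.toMatrix_apply,
        Equiv.toPEquiv_apply, Option.mem_def, Option.some.injEq,
        Equiv.swap_apply_def, Fin.ext_iff, apply_ite Fin.val]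
      split_ifs <;> first | rfl | (exfalso; omega)
    rw [this, Matrix.det_permutation]
    rcases Int.units_eq_one_or (Equiv.Perm.sign (Equiv.swap (⟨l - 1 - (n - i), by omega⟩ : Fin i)
      ⟨m - 1 - (n - i), by omega⟩)) with h | h <;> rw [h] <;> simp

lemma lineMat_eval (k : Type*) [CommRing k] (n l m : ℕ) :
    (lineMat k n l m).map (Polynomial.evalRingHom 0) = Pmat k n (Equiv.swap l m) := by
  ext p q
  simp [lineMat]

lemma delta_line (k : Type*) [Field k] {n : ℕ} (hn : 0 < n) (l m i : ℕ) (hi : i ≤ n)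
    (hl : 1 ≤ l) (hlm : l < m) (hm : m ≤ n) :
    ∃ u : Polynomial k, u.coeff 0 ≠ 0 ∧
      delta i (lineMat k n l m) = u * Polynomial.X ^ dd n l m i := by
  by_cases h : l ≤ n - i ∧ n - i < m
  · refine ⟨1, by simp, ?_⟩
    have e : (lineMat k n l m).submatrix (idx i hi) (idx i hi) =
        Matrix.diagonal (fun t : Fin i => if t = ⟨m - 1 - (n - i), by omega⟩
          then (Polynomial.X : Polynomial k) else 1) := by
      ext1 p q
      simp only [Matrix.submatrix_apply, lineMat, Matrix.add_apply, Matrix.smul_apply,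
        Matrix.map_apply, Pmat, Emat, idx, Matrix.diagonal_apply, Fin.ext_iff,
        Equiv.swap_apply_def, smul_eq_mul]
      split_ifs <;> first | (exfalso; omega) | simp
    rw [delta_eq hn i hi, e, Matrix.det_diagonal, Finset.prod_ite_eq' Finset.univ]
    simp [dd, h]
  · refine ⟨delta i (lineMat k n l m), ?_, by simp [dd, h]⟩
    rw [Polynomial.coeff_zero_eq_eval_zero, ← Polynomial.coe_evalRingHom,
      ← delta_map _ hn i hi, lineMat_eval]
    exact delta_Pmat_ne k hn l m i hi hl hlm hm h

lemma exists_support {σ k : Type*} [Field k] (v : σ → k) (P : MvPolynomial σ k) (d : ℕ)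
    (h : (aeval (fun x => Polynomial.C (v x) * Polynomial.X) P : Polynomial k).coeff d ≠ 0) :
    ∃ s ∈ P.support, (s.sum fun _ e => e) = d := by
  by_contra hc
  push Not at hc
  apply h
  rw [MvPolynomial.aeval_def, MvPolynomial.eval₂_eq, Polynomial.finsetSum_coeff]
  apply Finset.sum_eq_zero
  intro s hs
  have : ∏ i ∈ s.support, (Polynomial.C (v i) * Polynomial.X) ^ s i
      = Polynomial.C (∏ i ∈ s.support, v i ^ s i) * Polynomial.X ^ (s.sum fun _ e => e) := by
    simp only [mul_pow, Finset.prod_mul_distrib, Finset.prod_pow_eq_pow_sum, map_prod, map_pow]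
    rfl
  rw [this, ← mul_assoc, Polynomial.algebraMap_eq, ← Polynomial.C_mul,
    Polynomial.coeff_C_mul_X_pow, if_neg]
  exact fun e => hc s hs e.symm

lemma ord_eq_of {σ k : Type*} [Field k] (v : σ → k) (P : MvPolynomial σ k) (d : ℕ)
    (h : (aeval (fun x => Polynomial.C (v x) * Polynomial.X) P : Polynomial k).coeff d ≠ 0)
    (h2 : P ∈ idealOfVars σ k ^ d) : ord P = d := by
  obtain ⟨s, hs, e⟩ := exists_support v P d h
  apply le_antisymm
  · exact Nat.sInf_le ⟨s, hs, e⟩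
  · apply le_csInf
    · exact ⟨_, s, hs, rfl⟩
    · rintro _ ⟨t, ht, rfl⟩
      have := (mem_pow_idealOfVars_iff d P).1 h2 t ht
      exact this

lemma ord_swap (k : Type*) [Field k] (n : ℕ) (hn : 0 < n) (c : ℕ → ℕ)
    (l m : ℕ) (hl : 1 ≤ l) (hlm : l < m) (hm : m ≤ n)
    (g bp bl : Matrix (Fin n) (Fin n) k)
    (hbp : IsUnit bp) (hbptri : ∀ p q : Fin n, q < p → bp p q = 0)
    (hbl : IsUnit bl) (hbltri : ∀ p q : Fin n, p < q → bl p q = 0)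
    (hg : g = bp * Pmat k n (Equiv.swap l m) * bl) :
    ord (fAt c g) = ∑ i ∈ Finset.Icc 1 (n - 1), dd n l m i * c i := by
  apply ord_eq_of (fun x => (bp * Emat k n m * bl) x.1 x.2)
  · set φ : MvPolynomial (Fin n × Fin n) k →ₐ[k] Polynomial k :=
      aeval (fun x => Polynomial.C ((bp * Emat k n m * bl) x.1 x.2) * Polynomial.X) with hφ
    have e : (genMat g).map φ.toRingHom
        = bp.map Polynomial.C * lineMat k n l m * bl.map Polynomial.C := by
      have e2 : bp.map Polynomial.C * lineMat k n l m * bl.map Polynomial.C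
          = g.map Polynomial.C
            + (Polynomial.X : Polynomial k) • (bp * Emat k n m * bl).map Polynomial.C := by
        rw [hg, lineMat]
        simp only [Matrix.map_mul, Matrix.mul_add, Matrix.add_mul, Matrix.mul_smul, Matrix.smul_mul]
      rw [e2]
      ext1 p q
      simp only [Matrix.map_apply, genMat, Matrix.add_apply, Matrix.smul_apply, smul_eq_mul,
        AlgHom.toRingHom_eq_coe, RingHom.coe_coe, map_add, hφ, aeval_X, aeval_C,
        Polynomial.algebraMap_eq, mul_comm]
    have key : ∀ i ∈ Finset.Icc 1 (n - 1), ∃ u : Polynomial k, u.coeff 0 ≠ 0 ∧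
        φ (delta i (genMat g)) = u * Polynomial.X ^ dd n l m i := by
      intro i hi
      have hi' : i ≤ n := by
        have := (Finset.mem_Icc.1 hi).2
        omega
      obtain ⟨u, hu, hd⟩ := delta_line k hn l m i hi' hl hlm hm
      refine ⟨Polynomial.C (delta i bp) * u * Polynomial.C (delta i bl), ?_, ?_⟩
      · simp only [Polynomial.coeff_mul_C, Polynomial.coeff_C_mul]
        exact mul_ne_zero (mul_ne_zero (delta_upper_ne hn i hi' bp hbp hbptri) hu)
          (delta_lower_ne hn i hi' bl hbl hbltri)
      · have := delta_map φ.toRingHom hn i hi' (genMat g)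
        rw [e, delta_mul hn i hi' _ _ _ (fun p q h => by simp [hbptri p q h])
          (fun p q h => by simp [hbltri p q h]), hd, delta_map _ hn i hi',
          delta_map _ hn i hi'] at this
        have t2 : φ (delta i (genMat g)) = φ.toRingHom (delta i (genMat g)) := rfl
        rw [t2, ← this]
        ring
    choose! u hu hd using key
    rw [fAt, map_prod]
    have : ∏ i ∈ Finset.Icc 1 (n - 1), φ (delta i (genMat g) ^ c i)
        = (∏ i ∈ Finset.Icc 1 (n - 1), u i ^ c i)
          * Polynomial.X ^ (∑ i ∈ Finset.Icc 1 (n - 1), dd n l m i * c i) := by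
      rw [← Finset.prod_pow_eq_pow_sum, ← Finset.prod_mul_distrib]
      apply Finset.prod_congr rfl
      intro i hi
      rw [map_pow, hd i hi, mul_pow, ← pow_mul]
    rw [this, Polynomial.coeff_mul_X_pow', if_pos le_rfl, Nat.sub_self,
      Polynomial.coeff_zero_eq_eval_zero, Polynomial.eval_prod, Finset.prod_ne_zero_iff]
    intro i hi
    rw [Polynomial.eval_pow, ← Polynomial.coeff_zero_eq_eval_zero]
    exact pow_ne_zero _ (hu i hi)
  · rw [fAt, ← Finset.prod_pow_eq_pow_sum]
    apply Ideal.prod_mem_prod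
    intro i hi
    have hi' : i ≤ n := by
      have := (Finset.mem_Icc.1 hi).2
      omega
    rw [pow_mul]
    apply Ideal.pow_mem_pow
    rw [dd]
    split_ifs with h
    · rw [mem_pow_idealOfVars_iff']
      intro x hx
      have hx0 : x = 0 := by
        rw [← Finsupp.degree_eq_zero_iff]
        omega
      have e1 : (genMat g).map (constantCoeff (σ := Fin n × Fin n) (R := k)) = g := by
        ext p q
        simp [genMat]
      rw [hx0, ← constantCoeff_eq, ← delta_map _ hn i hi', e1, hg,
        delta_mul hn i hi' _ _ _ hbptri hbltri]
      obtain ⟨u, hu, hd⟩ := delta_line k hn l m i hi' hl hlm hm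
      have : delta i (Pmat k n (Equiv.swap l m)) = 0 := by
        rw [← lineMat_eval, delta_map _ hn i hi', hd]
        simp [dd, h]
      rw [this]
      simp
    · simp

theorem ord_prod_minors_repeated_reflection
    (k : Type*) [Field k] (n : ℕ) (hn : 2 ≤ n) (c : ℕ → ℕ)
    (a b : ℕ) (ha : 1 ≤ a ∧ a ≤ n - 1) (hb : 1 ≤ b ∧ b ≤ n - 1) (hab : a ≠ b)
    (g bp bl : Matrix (Fin n) (Fin n) k)
    (hbp : IsUnit bp) (hbptri : ∀ p q : Fin n, q < p → bp p q = 0)  -- b⁺ upper-triangular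
    (hbl : IsUnit bl) (hbltri : ∀ p q : Fin n, p < q → bl p q = 0)  -- b lower-triangular
    (hg : g = bp * Pmat k n (τ a * τ b * τ a) * bl) :
    ord (fAt c g) =
      if a + 1 = b ∨ b + 1 = a then c (n - b) + c (n - a) else c (n - b) := by
  obtain ⟨ha1, ha2⟩ := ha
  obtain ⟨hb1, hb2⟩ := hb
  have hn0 : 0 < n := by omega
  split_ifs with h
  · have hw : τ a * τ b * τ a = Equiv.swap (min a b) (min a b + 2) := by
      ext x
      simp only [τ, Equiv.Perm.mul_apply, Equiv.swap_apply_def]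
      split_ifs <;> omega
    rw [hw] at hg
    rw [ord_swap k n hn0 c (min a b) (min a b + 2) (by omega) (by omega) (by omega) g bp bl
      hbp hbptri hbl hbltri hg]
    simp only [dd, ite_mul, one_mul, zero_mul]
    rw [← Finset.sum_filter]
    have : (Finset.Icc 1 (n - 1)).filter
        (fun i => min a b ≤ n - i ∧ n - i < min a b + 2) = {n - b, n - a} := by
      ext i
      simp only [Finset.mem_filter, Finset.mem_Icc, Finset.mem_insert, Finset.mem_singleton]
      omega
    rw [this, Finset.sum_pair (by omega)]
  · have hw : τ a * τ b * τ a = Equiv.swap b (b + 1) := by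
      ext x
      simp only [τ, Equiv.Perm.mul_apply, Equiv.swap_apply_def]
      split_ifs <;> omega
    rw [hw] at hg
    rw [ord_swap k n hn0 c b (b + 1) (by omega) (by omega) (by omega) g bp bl
      hbp hbptri hbl hbltri hg]
    simp only [dd, ite_mul, one_mul, zero_mul]
    rw [← Finset.sum_filter]
    have : (Finset.Icc 1 (n - 1)).filter
        (fun i => b ≤ n - i ∧ n - i < b + 1) = {n - b} := by
      ext i
      simp only [Finset.mem_filter, Finset.mem_Icc, Finset.mem_singleton]
      omega
    rw [this, Finset.sum_singleton]


end Stmt17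
end
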